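/- arXiv:1711.02170 — 4 statements merged into one kernel-verified Lean document; each statement's English description precedes it below -/
import Mathlib

section
/- Let K be a finite extension of ℚ₂ with valuation ring O_K, normalized valuation v (so v(π)=1 for a uniformizer π), and e = v(2). Let c₄, c₆, Δ ∈ O_K satisfy c₄³ − c₆² = 1728Δ and Δ ≠ 0. Then there exists a Weierstrass curve with coefficients a₁, a₂, a₃, a₄, a₆ ∈ O_K whose invariants are c₄ and c₆ if and only if one of the following holds: (1) v(c₄) = 0 and there exists a₁ ∈ O_K with a₁² ≡ −c₆ (mod 4); (2) 0 < v(c₄) < 4e and there exist a₁, a₃ ∈ O_K such that, with d = −a₁⁶ + 3a₁²c₄ + 2c₆, one has d ≡ 0 (mod 16), 16a₃² ≡ d (mod 64), and 4a₁²d ≡ (a₁⁴ − c₄)² (mod 256); (3) v(c₄) ≥ 4e and there exists a₃ ∈ O_K with 8a₃² ≡ c₆ (mod 32). -/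
section KrausAux
variable {R : Type*} [CommRing R]

theorem kraus_short (h3 : IsUnit (3 : R)) (W : WeierstrassCurve R) :
    ∃ a₁ a₃ a₄ a₆ : R, W.c₄ = a₁ ^ 4 - 24 * (2 * a₄ + a₁ * a₃) ∧
      W.c₆ = -a₁ ^ 6 + 36 * a₁ ^ 2 * (2 * a₄ + a₁ * a₃) - 216 * (a₃ ^ 2 + 4 * a₆) := by
  obtain ⟨w, hw⟩ := h3.exists_right_inv
  obtain ⟨a1, a2, a3, a4, a6⟩ := W
  obtain ⟨r, hr⟩ : ∃ r, a2 = -3 * r := ⟨-w * a2, by linear_combination (-a2) * hw⟩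
  subst hr
  refine ⟨a1, a3 + r * a1, a4 + 2 * r * (-3 * r) + 3 * r ^ 2,
    a6 + r * a4 + r ^ 2 * (-3 * r) + r ^ 3, ?_, ?_⟩ <;>
  simp only [WeierstrassCurve.c₄, WeierstrassCurve.c₆, WeierstrassCurve.b₂,
    WeierstrassCurve.b₄, WeierstrassCurve.b₆] <;> ring

theorem kraus_fwd2 (a₁ a₃ a₄ a₆ c₄ c₆ : R)
    (h4 : c₄ = a₁ ^ 4 - 24 * (2 * a₄ + a₁ * a₃))
    (h6 : c₆ = -a₁ ^ 6 + 36 * a₁ ^ 2 * (2 * a₄ + a₁ * a₃) - 216 * (a₃ ^ 2 + 4 * a₆)) :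
    (16 : R) ∣ (-a₁ ^ 6 + 3 * a₁ ^ 2 * c₄ + 2 * c₆) ∧
    (64 : R) ∣ (16 * a₃ ^ 2 - (-a₁ ^ 6 + 3 * a₁ ^ 2 * c₄ + 2 * c₆)) ∧
    (256 : R) ∣ (4 * a₁ ^ 2 * (-a₁ ^ 6 + 3 * a₁ ^ 2 * c₄ + 2 * c₆) - (a₁ ^ 4 - c₄) ^ 2) := by
  subst h4 h6
  refine ⟨⟨-27 * (a₃ ^ 2 + 4 * a₆), by ring⟩, ⟨7 * a₃ ^ 2 + 27 * a₆, by ring⟩,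
    ⟨-9 * (a₁ ^ 2 * a₃ ^ 2 + 3 * a₁ ^ 2 * a₆ + a₄ ^ 2 + a₁ * a₃ * a₄), by ring⟩⟩

theorem kraus_rev1 (c₄ c₆ Δ a : R) (hrel : c₄ ^ 3 - c₆ ^ 2 = 1728 * Δ) (hu : IsUnit c₄)
    (ha : (4 : R) ∣ a ^ 2 + c₆) : ∃ W : WeierstrassCurve R, W.c₄ = c₄ ∧ W.c₆ = c₆ := by
  obtain ⟨i, hi⟩ := hu.exists_right_inv
  obtain ⟨k, hk⟩ := ha
  have hc : ∃ a2, -c₆ * i = (a * c₆ * i ^ 2) ^ 2 + 4 * a2 := by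
    refine ⟨-k * c₆ ^ 2 * i ^ 4 - 432 * Δ * c₆ * i ^ 4, ?_⟩
    have e1 : c₄ ^ 3 * i ^ 3 = 1 := by rw [← mul_pow, hi, one_pow]
    linear_combination (-c₆ ^ 2 * i ^ 4) * hk + c₆ * i * e1 - c₆ * i ^ 4 * hrel
  obtain ⟨a2, h2⟩ := hc
  have e2 : c₄ ^ 2 * i ^ 2 = 1 := by rw [← mul_pow, hi, one_pow]
  have e3 : c₄ ^ 3 * i ^ 3 = 1 := by rw [← mul_pow, hi, one_pow]
  refine ⟨⟨a * c₆ * i ^ 2, a2, 0, -36 * Δ * i ^ 2, Δ * c₆ * i ^ 3⟩, ?_, ?_⟩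
  · simp only [WeierstrassCurve.c₄, WeierstrassCurve.b₂, WeierstrassCurve.b₄]
    rw [← h2]
    linear_combination (-i ^ 2) * hrel + c₄ * e2
  · simp only [WeierstrassCurve.c₆, WeierstrassCurve.b₂, WeierstrassCurve.b₄, WeierstrassCurve.b₆]
    rw [← h2]
    linear_combination (-c₆ * i ^ 3) * hrel + c₆ * e3

theorem kraus_rev3 (h3 : IsUnit (3 : R)) (c₄ c₆ a : R) (h4 : (16 : R) ∣ c₄)
    (ha : (32 : R) ∣ 8 * a ^ 2 - c₆) : ∃ W : WeierstrassCurve R, W.c₄ = c₄ ∧ W.c₆ = c₆ := by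
  obtain ⟨w, hw⟩ := h3.exists_right_inv
  obtain ⟨k, hk⟩ := ha
  obtain ⟨l, rfl⟩ := h4
  have e3 : 27 * w ^ 3 = 1 := by
    have : (3 * w) ^ 3 = 1 := by rw [hw, one_pow]
    linear_combination this
  refine ⟨⟨0, 0, a, - w * l, w ^ 3 * (k - 7 * a ^ 2)⟩, ?_, ?_⟩
  · simp only [WeierstrassCurve.c₄, WeierstrassCurve.b₂, WeierstrassCurve.b₄]
    linear_combination (16 * l) * hw
  · simp only [WeierstrassCurve.c₆, WeierstrassCurve.b₂, WeierstrassCurve.b₄, WeierstrassCurve.b₆]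
    linear_combination (-32 * (k - 7 * a ^ 2)) * e3 + hk

variable [IsDomain R] [ValuationRing R]

theorem kraus_pow_dvd (n : ℕ) (hn : n ≠ 0) (a b : R) (h : a ^ n ∣ b ^ n) : a ∣ b := by
  rcases ValuationRing.dvd_total a b with h1 | ⟨t, rfl⟩
  · exact h1
  · by_cases hb : b = 0
    · simp [hb]
    rw [mul_pow] at h
    obtain ⟨k, hk⟩ := h
    have h1 : t ^ n * k = 1 := by
      apply mul_left_cancel₀ (pow_ne_zero n hb)
      linear_combination -hk
    have h2 : IsUnit t := (isUnit_pow_iff hn).1 (IsUnit.of_mul_eq_one _ h1)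
    exact (h2.mul_right_dvd).2 dvd_rfl

theorem kraus_fwd3 (h2 : (2 : R) ≠ 0) (a₁ a₃ a₄ a₆ c₄ c₆ : R) (hd : (16 : R) ∣ c₄)
    (h4 : c₄ = a₁ ^ 4 - 24 * (2 * a₄ + a₁ * a₃))
    (h6 : c₆ = -a₁ ^ 6 + 36 * a₁ ^ 2 * (2 * a₄ + a₁ * a₃) - 216 * (a₃ ^ 2 + 4 * a₆)) :
    (32 : R) ∣ 8 * a₃ ^ 2 - c₆ := by
  have h21 : (2 : R) ∣ a₁ := by
    rcases ValuationRing.dvd_total (2 : R) a₁ with h1 | ⟨t, ht⟩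
    · exact h1
    · have ha : a₁ ≠ 0 := by
        rintro rfl
        apply h2; simpa using ht
      apply kraus_pow_dvd 3 (by norm_num)
      obtain ⟨l, rfl⟩ := hd
      refine ⟨t * (l + 3 * a₄) + 3 * a₃, mul_left_cancel₀ ha ?_⟩
      linear_combination (-1) * h4 + (8 * l + 24 * a₄) * ht
  obtain ⟨b, rfl⟩ := h21
  subst h6
  exact ⟨2 * b ^ 6 - 9 * b ^ 2 * (a₄ + b * a₃) + 7 * a₃ ^ 2 + 27 * a₆, by ring⟩

theorem kraus_sq (y m : R) (h : (4 : R) ∣ y * (y + 2 * m)) : (2 : R) ∣ y := by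
  rcases ValuationRing.dvd_total (2 : R) y with h1 | ⟨t, ht⟩
  · exact h1
  · by_cases hu : IsUnit t
    · rw [ht]; exact (hu.mul_right_dvd).2 dvd_rfl
    · have h1 : IsUnit (1 + t * m) := by
        rcases IsLocalRing.isUnit_or_isUnit_of_add_one (a := -(t * m)) (b := 1 + t * m) (by ring) with h | h
        · exact absurd (isUnit_of_mul_isUnit_left (by simpa using h)) hu
        · exact h
      apply kraus_pow_dvd 2 (by norm_num)
      have : y * (y + 2 * m) = y ^ 2 * (1 + t * m) := by linear_combination y * m * ht
      rw [this, h1.dvd_mul_right] at h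
      norm_num
      exact h

theorem kraus_rev2 (h2 : (2 : R) ≠ 0) (h3 : IsUnit (3 : R)) (c₄ c₆ a₁ a₃ : R)
    (hA : (16 : R) ∣ (-a₁ ^ 6 + 3 * a₁ ^ 2 * c₄ + 2 * c₆))
    (hB : (64 : R) ∣ (16 * a₃ ^ 2 - (-a₁ ^ 6 + 3 * a₁ ^ 2 * c₄ + 2 * c₆)))
    (hC : (256 : R) ∣ (4 * a₁ ^ 2 * (-a₁ ^ 6 + 3 * a₁ ^ 2 * c₄ + 2 * c₆) - (a₁ ^ 4 - c₄) ^ 2)) :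
    ∃ W : WeierstrassCurve R, W.c₄ = c₄ ∧ W.c₆ = c₆ := by
  obtain ⟨w, hw⟩ := h3.exists_right_inv
  have e3 : 27 * w ^ 3 = 1 := by
    have : (3 * w) ^ 3 = 1 := by rw [hw, one_pow]
    linear_combination this
  generalize hd : -a₁ ^ 6 + 3 * a₁ ^ 2 * c₄ + 2 * c₆ = d at *
  obtain ⟨d', rfl⟩ := hA
  have h8 : (8 : R) ∣ a₁ ^ 4 - c₄ := by
    apply kraus_pow_dvd 2 (by norm_num)
    obtain ⟨k, hk⟩ := hC
    exact ⟨a₁ ^ 2 * d' - 4 * k, by linear_combination -hk⟩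
  obtain ⟨f, hf⟩ := h8
  obtain ⟨k, hk⟩ := hB
  obtain ⟨l, hl⟩ := hC
  have h4 : (4 : R) ≠ 0 := by
    have := pow_ne_zero 2 h2; norm_num at this; exact this
  have h16 : (16 : R) ≠ 0 := by
    have := pow_ne_zero 4 h2; norm_num at this; exact this
  have h64 : (64 : R) ≠ 0 := by
    have := pow_ne_zero 6 h2; norm_num at this; exact this
  have hk' : d' = a₃ ^ 2 - 4 * k := mul_left_cancel₀ h16 (by linear_combination -hk)
  have hl' : a₁ ^ 2 * d' - f ^ 2 = 4 * l :=
    mul_left_cancel₀ h64 (by rw [hf] at hl; linear_combination hl)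
  -- b4 = w * f, b6 = - w^3 * d'
  have hy : (2 : R) ∣ w * f - a₁ * a₃ := by
    apply kraus_sq _ (a₁ * a₃)
    refine ⟨w ^ 2 * (-l - a₁ ^ 2 * k) - 2 * w ^ 2 * a₁ ^ 2 * a₃ ^ 2, ?_⟩
    rw [hk'] at hl'
    linear_combination (-w ^ 2) * hl' + (a₁ ^ 2 * a₃ ^ 2) * (3 * w + 1) * hw
  obtain ⟨a4, ha4⟩ := hy
  refine ⟨⟨a₁, 0, a₃, a4, w ^ 3 * (k - 7 * a₃ ^ 2)⟩, ?_, ?_⟩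
  · simp only [WeierstrassCurve.c₄, WeierstrassCurve.b₂, WeierstrassCurve.b₄]
    linear_combination 24 * ha4 + hf - 8 * f * hw
  · simp only [WeierstrassCurve.c₆, WeierstrassCurve.b₂, WeierstrassCurve.b₄, WeierstrassCurve.b₆]
    apply mul_left_cancel₀ h2
    subst hk'
    linear_combination (-72 * a₁ ^ 2) * ha4 - hd - 3 * a₁ ^ 2 * hf + 24 * a₁ ^ 2 * f * hw
      - (64 * (k - 7 * a₃ ^ 2)) * e3

theorem kraus_unit (π : R) (hπ : Irreducible π) (x : R) (h : ¬ π ∣ x) : IsUnit x := by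
  rcases ValuationRing.dvd_total π x with h1 | ⟨t, ht⟩
  · exact absurd h1 h
  · rcases hπ.isUnit_or_isUnit ht with h1 | h1
    · exact h1
    · exact absurd (by rw [ht]; exact (h1.mul_right_dvd).2 dvd_rfl) h

end KrausAux


/-- **Kraus's criterion** (Proposition: Kraus). Let `K` be a finite extension of `ℚ₂` with
valuation ring `O` (pinned down as the valuation subring extending the `2`-adic one),
normalized valuation `v` (characterized via an irreducible element `π`, with `v 0 = ⊤`) and
`e = v 2`.  Given `c₄, c₆, Δ ∈ O` with `c₄ ^ 3 - c₆ ^ 2 = 1728 * Δ ≠ 0`, there is an integral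
Weierstrass model with invariants `c₄` and `c₆` iff one of the three listed congruence
conditions holds. -/
theorem kraus_criterion_integral_weierstrass_model
    (K : Type*) [Field K] [Algebra ℚ_[2] K] [FiniteDimensional ℚ_[2] K]
    (O : ValuationSubring K)
    (hO : ∀ x : ℚ_[2], algebraMap ℚ_[2] K x ∈ O ↔ ‖x‖ ≤ 1)
    (v : O → ℕ∞) (π : O) (hπ : Irreducible π)
    (hv : ∀ x : O, x ≠ 0 → ∀ n : ℕ, v x = n ↔ (π ^ n ∣ x ∧ ¬ π ^ (n + 1) ∣ x))
    (hv0 : v 0 = ⊤)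
    (e : ℕ) (he : (e : ℕ∞) = v 2)
    (c₄ c₆ Δ : O) (hΔ : Δ ≠ 0) (hrel : c₄ ^ 3 - c₆ ^ 2 = 1728 * Δ) :
    (∃ W : WeierstrassCurve O, W.c₄ = c₄ ∧ W.c₆ = c₆) ↔
      ((v c₄ = 0 ∧ ∃ a₁ : O, (4 : O) ∣ a₁ ^ 2 + c₆) ∨
       (0 < v c₄ ∧ v c₄ < (4 * e : ℕ) ∧ ∃ a₁ a₃ : O,
          (16 : O) ∣ (-a₁ ^ 6 + 3 * a₁ ^ 2 * c₄ + 2 * c₆) ∧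
          (64 : O) ∣ (16 * a₃ ^ 2 - (-a₁ ^ 6 + 3 * a₁ ^ 2 * c₄ + 2 * c₆)) ∧
          (256 : O) ∣ (4 * a₁ ^ 2 * (-a₁ ^ 6 + 3 * a₁ ^ 2 * c₄ + 2 * c₆) - (a₁ ^ 4 - c₄) ^ 2)) ∨
       ((4 * e : ℕ) ≤ v c₄ ∧ ∃ a₃ : O, (32 : O) ∣ (8 * a₃ ^ 2 - c₆))) := by
  have h2K : (2 : K) ≠ 0 := by
    have : CharZero K := charZero_of_injective_algebraMap (algebraMap ℚ_[2] K).injective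
    norm_num
  have h2 : (2 : O) ≠ 0 := by
    intro h
    apply h2K
    exact congrArg (Subtype.val) h
  have h3 : IsUnit (3 : O) := by
    have h3n : ‖(3 : ℚ_[2])‖ = 1 := by
      have := (Padic.norm_natCast_eq_one_iff (p := 2) (n := 3)).2 (by decide)
      exact_mod_cast this
    have hm : algebraMap ℚ_[2] K (3⁻¹) ∈ O := (hO _).2 (by rw [norm_inv, h3n]; norm_num)
    refine IsUnit.of_mul_eq_one ⟨_, hm⟩ ?_
    apply Subtype.ext
    have h30 : (3 : ℚ_[2]) ≠ 0 := by norm_num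
    have : algebraMap ℚ_[2] K 3 * algebraMap ℚ_[2] K 3⁻¹ = 1 := by
      rw [← map_mul, mul_inv_cancel₀ h30, map_one]
    rw [map_ofNat] at this
    exact this
  have hv1 : ∀ x : O, v x = 0 → IsUnit x := by
    intro x hx
    have hx0 : x ≠ 0 := by
      rintro rfl
      rw [hv0] at hx
      exact absurd hx (by simp)
    have := (hv x hx0 0).1 (by simpa using hx)
    apply kraus_unit π hπ x
    simpa using this.2
  have hv2 : ∀ x : O, ((4 * e : ℕ) : ℕ∞) ≤ v x → (16 : O) ∣ x := by
    intro x hx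
    obtain ⟨⟨u, hu⟩, h22⟩ := (hv 2 h2 e).1 he.symm
    have huu : IsUnit u := by
      apply kraus_unit π hπ u
      rintro ⟨t, rfl⟩
      exact h22 ⟨t, by rw [hu]; ring⟩
    have h16 : (16 : O) = π ^ (4 * e) * u ^ 4 := by
      calc (16 : O) = 2 ^ 4 := by norm_num
        _ = _ := by rw [hu, mul_pow, ← pow_mul, mul_comm e 4]
    rw [h16, (huu.pow 4).mul_right_dvd]
    by_contra hnd
    have hx0 : x ≠ 0 := by
      rintro rfl
      exact hnd (dvd_zero _)
    classical
    have hex : ∃ n, ¬ π ^ n ∣ x := ⟨_, hnd⟩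
    have hle : Nat.find hex ≤ 4 * e := Nat.find_min' hex hnd
    have hsp := Nat.find_spec hex
    have hmin := @Nat.find_min _ _ hex
    generalize Nat.find hex = n at *
    cases n with
    | zero => simp at hsp
    | succ m =>
      have hm : π ^ m ∣ x := by
        by_contra h
        exact hmin (Nat.lt_succ_self m) h
      have := (hv x hx0 m).2 ⟨hm, hsp⟩
      rw [this] at hx
      have : 4 * e ≤ m := by exact_mod_cast hx
      omega
  constructor
  · rintro ⟨W, hW4, hW6⟩
    obtain ⟨a₁, a₃, a₄, a₆, h4, h6⟩ := kraus_short h3 W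
    rw [hW4] at h4
    rw [hW6] at h6
    by_cases hc : v c₄ = 0
    · refine Or.inl ⟨hc, a₁ ^ 3, ?_⟩
      exact ⟨9 * a₁ ^ 2 * (2 * a₄ + a₁ * a₃) - 54 * (a₃ ^ 2 + 4 * a₆), by rw [h6]; ring⟩
    by_cases hc4 : ((4 * e : ℕ) : ℕ∞) ≤ v c₄
    · exact Or.inr (Or.inr ⟨hc4, a₃, kraus_fwd3 h2 _ _ _ _ _ _ (hv2 _ hc4) h4 h6⟩)
    · exact Or.inr (Or.inl ⟨pos_iff_ne_zero.2 hc, not_le.1 hc4, a₁, a₃,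
        kraus_fwd2 _ _ _ _ _ _ h4 h6⟩)
  · rintro (⟨hc, a, ha⟩ | ⟨-, -, a₁, a₃, hA, hB, hC⟩ | ⟨hc, a, ha⟩)
    · exact kraus_rev1 c₄ c₆ Δ a hrel (hv1 _ hc) ha
    · exact kraus_rev2 h2 h3 c₄ c₆ a₁ a₃ hA hB hC
    · exact kraus_rev3 h3 c₄ c₆ a (hv2 _ hc) ha
end

section
/- Let K = ℚ₂(√−1), the extension of ℚ₂ generated by a square root of −1, with valuation ring O_K. A unit α ∈ O_K is a fourth power in K if and only if α ≡ 1 (mod (1 + √−1)⁷), i.e. if and only if (1 + √−1)⁷ divides α − 1 in O_K. -/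
theorem aux_par (t : ℤ_[2]) : ∃ s : ℤ_[2], t = 2 * s ∨ t = 1 + 2 * s := by
  have h := PadicInt.exists_mem_range (p := 2) t
  obtain ⟨n, hn, h2⟩ := h
  rw [PadicInt.maximalIdeal_eq_span_p, Ideal.mem_span_singleton] at h2
  obtain ⟨s, hs⟩ := h2
  refine ⟨s, ?_⟩
  have hs' : t = n + 2 * s := by
    have : t = n + (t - n) := by ring
    rw [this, hs]; norm_num
  interval_cases n
  · left; simpa using hs'
  · right; simpa using hs'

theorem aux_four (x : ℤ_[2]) : (4 : ℤ_[2]) * x ≠ 2 := by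
  intro h
  have : (2 : ℤ_[2]) * (2 * x - 1) = 0 := by linear_combination h
  rcases mul_eq_zero.1 this with h | h
  · norm_num at h
  · have h1 : (2 : ℤ_[2]) * x = 1 := by linear_combination h
    have h2 : IsUnit (2 : ℤ_[2]) := IsUnit.of_mul_eq_one _ h1
    have := (PadicInt.prime_p (p := 2)).not_isUnit
    exact this (by simpa using h2)

theorem aux_nsq (r : ℤ_[2]) : r ^ 2 ≠ -1 := by
  intro h
  obtain ⟨s, rfl | rfl⟩ := aux_par r
  · exact aux_four (-2 * s ^ 2) (by linear_combination (-2) * h)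
  · exact aux_four (s + s ^ 2 + 1) (by linear_combination h)

theorem aux_sum_ne (P Q : ℤ_[2]) (h : P ^ 2 + Q ^ 2 = 0) : P = 0 ∧ Q = 0 := by
  by_cases hQ : Q = 0
  · subst hQ
    refine ⟨?_, rfl⟩
    simpa using h
  · exfalso
    have hQ' : (Q : ℚ_[2]) ≠ 0 := fun h => hQ (Subtype.ext h)
    have h' : (P : ℚ_[2]) ^ 2 + (Q : ℚ_[2]) ^ 2 = 0 := by
      have := congrArg (PadicInt.Coe.ringHom (p := 2)) h
      rw [map_add, map_pow, map_pow, map_zero] at this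
      exact this
    have h2 : ((P : ℚ_[2]) / Q) ^ 2 = -1 := by
      field_simp; linear_combination h'
    have h3 : ‖((P : ℚ_[2]) / Q)‖ ≤ 1 := by
      have := congrArg norm h2
      rw [norm_pow, norm_neg, norm_one] at this
      nlinarith [norm_nonneg ((P : ℚ_[2]) / Q)]
    obtain ⟨r, hr⟩ : ∃ r : ℤ_[2], (r : ℚ_[2]) = (P : ℚ_[2]) / Q := ⟨⟨_, h3⟩, rfl⟩
    rw [← hr] at h2
    apply aux_nsq r
    apply Subtype.ext
    have e : ((r ^ 2 : ℤ_[2]) : ℚ_[2]) = (r : ℚ_[2]) ^ 2 := PadicInt.coe_pow r 2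
    have e' : ((-1 : ℤ_[2]) : ℚ_[2]) = -1 := by rw [PadicInt.coe_neg, PadicInt.coe_one]
    exact e.trans (h2.trans e'.symm)

theorem aux_hensel (g1 g2 d1 d2 : ℤ_[2]) (hd : ‖d1 ^ 2 + d2 ^ 2‖ < 1) :
    ∃ a b : ℤ_[2], a - g1 - (d1 * (a ^ 2 - b ^ 2) - 2 * d2 * a * b) = 0 ∧
      b - g2 - (d2 * (a ^ 2 - b ^ 2) + 2 * d1 * a * b) = 0 := by
  let P : ℤ_[2] × ℤ_[2] → ℤ_[2] := fun x =>
    x.1 - g1 - (d1 * (x.1 ^ 2 - x.2 ^ 2) - 2 * d2 * x.1 * x.2)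
  let Q : ℤ_[2] × ℤ_[2] → ℤ_[2] := fun x =>
    x.2 - g2 - (d2 * (x.1 ^ 2 - x.2 ^ 2) + 2 * d1 * x.1 * x.2)
  have hc : Continuous (fun x => ‖P x ^ 2 + Q x ^ 2‖) := by
    simp only [P, Q]; fun_prop
  obtain ⟨x, -, hx⟩ := (isCompact_univ (X := ℤ_[2] × ℤ_[2])).exists_isMinOn
    Set.univ_nonempty hc.continuousOn
  have key : P (x.1 - P x, x.2 - Q x) ^ 2 + Q (x.1 - P x, x.2 - Q x) ^ 2 =
      (d1 ^ 2 + d2 ^ 2) * (P x ^ 2 + Q x ^ 2) *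
        ((2 * x.1 - P x) ^ 2 + (2 * x.2 - Q x) ^ 2) := by
    have e1 : P (x.1 - P x, x.2 - Q x) =
        (d1 * P x - d2 * Q x) * (2 * x.1 - P x) - (d1 * Q x + d2 * P x) * (2 * x.2 - Q x) := by
      simp only [P, Q]; ring
    have e2 : Q (x.1 - P x, x.2 - Q x) =
        (d1 * P x - d2 * Q x) * (2 * x.2 - Q x) + (d1 * Q x + d2 * P x) * (2 * x.1 - P x) := by
      simp only [P, Q]; ring
    rw [e1, e2]; ring
  have hm := hx (Set.mem_univ (x.1 - P x, x.2 - Q x))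
  simp only [Set.mem_ofPred_eq] at hm
  rw [key, norm_mul, norm_mul] at hm
  have h1 := PadicInt.norm_le_one ((2 * x.1 - P x) ^ 2 + (2 * x.2 - Q x) ^ 2)
  have h0 : ‖P x ^ 2 + Q x ^ 2‖ = 0 := by
    by_contra hne
    have hpos : 0 < ‖P x ^ 2 + Q x ^ 2‖ := lt_of_le_of_ne (norm_nonneg _) (Ne.symm hne)
    have : ‖d1 ^ 2 + d2 ^ 2‖ * ‖P x ^ 2 + Q x ^ 2‖ *
        ‖(2 * x.1 - P x) ^ 2 + (2 * x.2 - Q x) ^ 2‖ ≤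
        ‖d1 ^ 2 + d2 ^ 2‖ * ‖P x ^ 2 + Q x ^ 2‖ * 1 := by gcongr
    nlinarith
  have := aux_sum_ne _ _ (norm_eq_zero.1 h0)
  exact ⟨x.1, x.2, this.1, this.2⟩

/-- Let `K = ℚ₂(√-1)` with valuation ring `O`.  A unit `α ∈ O` is a fourth power in `K` if and
only if `(1 + √-1) ^ 7` divides `α - 1` in `O`. -/
theorem fourth_power_in_Q2i_iff_congruent_one
    (K : Type*) [Field K] [Algebra ℚ_[2] K] [FiniteDimensional ℚ_[2] K]
    (i : K) (hi : i ^ 2 = -1) (hKgen : Algebra.adjoin ℚ_[2] {i} = ⊤)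
    (O : ValuationSubring K)
    (hO : ∀ x : ℚ_[2], algebraMap ℚ_[2] K x ∈ O ↔ ‖x‖ ≤ 1)
    (j : O) (hj : (j : K) = i)
    (α : O) (hαunit : IsUnit α) :
    (∃ y : K, y ^ 4 = (α : K)) ↔ (1 + j) ^ 7 ∣ α - 1 := by
  have hj2 : j ^ 2 = -1 := by
    apply Subtype.ext; push_cast; rw [hj, hi]
  -- the inclusion of the 2-adic integers
  let φ : ℤ_[2] →+* O :=
    ((algebraMap ℚ_[2] K).comp (PadicInt.Coe.ringHom (p := 2))).codRestrict O.toSubring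
      (fun x => (hO x).2 x.2)
  have hφ : ∀ x : ℤ_[2], ((φ x : O) : K) = algebraMap ℚ_[2] K x := fun x => rfl
  have h2nu : ¬ IsUnit (2 : O) := by
    intro h
    obtain ⟨u, hu⟩ := h.exists_right_inv
    have h1 : (2 : K) * u = 1 := by
      have := congrArg O.subtype hu
      rw [map_mul, map_ofNat, map_one] at this
      exact this
    have h3 : (u : K) = algebraMap ℚ_[2] K (2⁻¹) := by
      rw [map_inv₀, map_ofNat]
      exact eq_inv_of_mul_eq_one_right h1
    have h4 := (hO (2⁻¹)).1 (h3 ▸ u.2)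
    have h5 : ‖(2 : ℚ_[2])‖ = 2⁻¹ := by
      have := Padic.norm_p (p := 2)
      simpa using this
    rw [norm_inv, h5] at h4
    norm_num at h4
  have hpnu : ¬ IsUnit (1 + j) := by
    intro h
    apply h2nu
    have : (2 : O) = (1 + j) ^ 2 * (-j) := by linear_combination (2 + j) * hj2
    rw [this]
    refine (h.pow 2).mul (IsUnit.neg ?_)
    exact IsUnit.of_mul_eq_one (-j) (by linear_combination - hj2)
  have hpnu' : ¬ IsUnit (1 - j) := by
    intro h
    apply hpnu
    have : (1 + j) = (1 - j) * j := by linear_combination hj2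
    rw [this]
    exact h.mul (IsUnit.of_mul_eq_one (-j) (by linear_combination - hj2))
  have hpne : (1 + j) ≠ 0 := by
    intro h
    have h2 : (2 : O) = 0 := by linear_combination (1 - j) * h + hj2
    have h2' : (2 : K) = 0 := by
      have := congrArg O.subtype h2
      rw [map_ofNat, map_zero] at this
      exact this
    have : algebraMap ℚ_[2] K 2 = 0 := by rw [map_ofNat]; exact h2'
    rw [map_eq_zero] at this
    norm_num at this
  have hdecK : ∀ x : K, ∃ a b : ℚ_[2], x = algebraMap _ K a + algebraMap _ K b * i := by
    intro x
    have hx : x ∈ Algebra.adjoin ℚ_[2] {i} := hKgen ▸ Algebra.mem_top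
    induction hx using Algebra.adjoin_induction with
    | mem x hx => exact ⟨0, 1, by simp at hx; simp [hx]⟩
    | algebraMap r => exact ⟨r, 0, by simp⟩
    | add x y _ _ hx hy =>
      obtain ⟨a, b, rfl⟩ := hx
      obtain ⟨c, d, rfl⟩ := hy
      exact ⟨a + c, b + d, by simp only [map_add]; ring⟩
    | mul x y _ _ hx hy =>
      obtain ⟨a, b, rfl⟩ := hx
      obtain ⟨c, d, rfl⟩ := hy
      refine ⟨a * c - b * d, a * d + b * c, ?_⟩
      simp only [map_add, map_sub, map_mul]
      linear_combination (algebraMap _ K b * algebraMap _ K d) * hi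
  -- `1 + t j` is not divisible by `2`
  have hnd : ∀ (t : ℤ_[2]) (w : O), 1 + φ t * j ≠ 2 * w := by
    intro t w h
    obtain ⟨s, rfl | rfl⟩ := aux_par t
    · simp only [map_mul, map_ofNat] at h
      apply h2nu
      exact IsUnit.of_mul_eq_one (w - φ s * j) (by linear_combination -h)
    · simp only [map_add, map_mul, map_ofNat, map_one] at h
      apply hpnu'
      refine IsUnit.of_mul_eq_one (w - φ s * j) ?_
      apply mul_left_cancel₀ hpne
      linear_combination -h + (φ s * j - w) * hj2
  have hA : ∀ (a b : ℚ_[2]), ‖b‖ ≤ ‖a‖ → algebraMap _ K a + algebraMap _ K b * i ∈ O →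
      ‖a‖ ≤ 1 := by
    intro a b hab hx
    by_contra hlt
    push Not at hlt
    have ha0 : a ≠ 0 := by rintro rfl; simp at hlt; linarith
    have haK : algebraMap _ K a ≠ 0 := by simpa using ha0
    have ht : ‖b / a‖ ≤ 1 := by
      rw [norm_div]; exact div_le_one_of_le₀ hab (norm_nonneg _)
    have hinv : ‖a⁻¹‖ < 1 := by
      rw [norm_inv]; exact inv_lt_one_of_one_lt₀ hlt
    obtain ⟨s, hs⟩ : (2 : ℤ_[2]) ∣ ⟨a⁻¹, hinv.le⟩ := by
      have := (PadicInt.norm_lt_one_iff_dvd (p := 2) ⟨a⁻¹, hinv.le⟩).1 hinv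
      simpa using this
    obtain ⟨t, ht'⟩ : ∃ t : ℤ_[2], (t : ℚ_[2]) = b / a := ⟨⟨_, ht⟩, rfl⟩
    apply hnd t (φ s * ⟨_, hx⟩)
    apply Subtype.ext
    have hs' : a⁻¹ = 2 * (s : ℚ_[2]) := by
      have := congrArg (PadicInt.Coe.ringHom (p := 2)) hs
      rw [map_mul, map_ofNat] at this
      exact this
    have hsK : (algebraMap _ K a)⁻¹ = 2 * algebraMap ℚ_[2] K s := by
      rw [← map_inv₀, hs', map_mul, map_ofNat]
    have e : (2 : K) * (algebraMap ℚ_[2] K s * (algebraMap _ K a + algebraMap _ K b * i)) =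
      (algebraMap _ K a)⁻¹ * (algebraMap _ K a + algebraMap _ K b * i) := by rw [hsK]; ring
    have e2 : ((2 : O) : K) = 2 := map_ofNat O.subtype 2
    push_cast
    rw [hφ, hφ, hj, ht', e2]
    simp only [map_div₀]
    refine Eq.trans ?_ e.symm
    field_simp
  have hdec : ∀ x : O, ∃ a b : ℤ_[2], x = φ a + φ b * j := by
    intro x
    obtain ⟨a, b, hab⟩ := hdecK x
    have hx : algebraMap _ K a + algebraMap _ K b * i ∈ O := hab ▸ x.2
    have : ‖a‖ ≤ 1 ∧ ‖b‖ ≤ 1 := by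
      rcases le_total ‖b‖ ‖a‖ with h | h
      · have := hA a b h hx
        exact ⟨this, h.trans this⟩
      · have := hA b (-a) (by simpa using h) (by
          have h2 := O.mul_mem _ _ (O.neg_mem _ (hj ▸ j.2)) hx
          convert h2 using 1
          rw [map_neg]
          linear_combination (algebraMap _ K b) * hi)
        exact ⟨h.trans this, this⟩
    obtain ⟨a', ha'⟩ : ∃ t : ℤ_[2], (t : ℚ_[2]) = a := ⟨⟨_, this.1⟩, rfl⟩
    obtain ⟨b', hb'⟩ : ∃ t : ℤ_[2], (t : ℚ_[2]) = b := ⟨⟨_, this.2⟩, rfl⟩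
    refine ⟨a', b', ?_⟩
    apply Subtype.ext
    push_cast
    rw [hφ, hφ, hj, ha', hb']
    exact hab
  have hres : ∀ z : O, ∃ t : O, z = (1 + j) * t ∨ z = 1 + (1 + j) * t := by
    intro z
    obtain ⟨a, b, rfl⟩ := hdec z
    obtain ⟨s, h | h⟩ := aux_par (a - b)
    · have h' : φ a - φ b = 2 * φ s := by rw [← map_sub, h]; simp only [map_add, map_mul, map_one, map_ofNat]
      refine ⟨φ b + (1 - j) * φ s, Or.inl ?_⟩
      linear_combination h' + φ s * hj2
    · have h' : φ a - φ b = 1 + 2 * φ s := by rw [← map_sub, h]; simp only [map_add, map_mul, map_one, map_ofNat]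
      refine ⟨φ b + (1 - j) * φ s, Or.inr ?_⟩
      linear_combination h' + φ s * hj2
  have hsolve : ∀ γ d : O, ∃ x : O, x = γ + (1 + j) * d * x ^ 2 := by
    intro γ d
    obtain ⟨g1, g2, hg⟩ := hdec γ
    obtain ⟨d1, d2, hd⟩ := hdec ((1 + j) * d)
    have hn : ‖d1 ^ 2 + d2 ^ 2‖ < 1 := by
      rw [← PadicInt.mem_nonunits, mem_nonunits_iff]
      intro hu
      have hu' := hu.map φ
      have e : φ (d1 ^ 2 + d2 ^ 2) = (1 + j) * (d * (φ d1 - φ d2 * j)) := by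
        rw [← mul_assoc, hd]
        simp only [map_add, map_pow]
        linear_combination φ d2 ^ 2 * hj2
      rw [e] at hu'
      exact hpnu (isUnit_of_mul_isUnit_left hu')
    obtain ⟨a, b, h1, h2⟩ := aux_hensel g1 g2 d1 d2 hn
    refine ⟨φ a + φ b * j, ?_⟩
    have h1' := congrArg φ h1
    have h2' := congrArg φ h2
    simp only [map_sub, map_add, map_mul, map_pow, map_ofNat, map_zero] at h1' h2'
    rw [hd, hg]
    linear_combination h1' + h2' * j +
      (-(φ d1 * φ b ^ 2) - 2 * φ d2 * φ a * φ b - φ d2 * φ b ^ 2 * j) * hj2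
  constructor
  · rintro ⟨y, hy⟩
    have hyO : y ∈ O := by
      rcases O.mem_or_inv_mem y with h | h
      · exact h
      · obtain ⟨u, hu⟩ := hαunit
        have hy0 : y ≠ 0 := by
          rintro rfl
          have : α = 0 := by apply Subtype.ext; rw [← hy]; simp
          exact (this ▸ (hu ▸ u.isUnit : IsUnit α)).ne_zero rfl
        have : y = α * (y⁻¹) ^ 3 := by rw [← hy]; field_simp
        rw [this]
        exact O.mul_mem _ _ α.2 (pow_mem h 3)
    obtain ⟨y, rfl⟩ : ∃ y' : O, (y' : K) = y := ⟨⟨y, hyO⟩, rfl⟩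
    have hy' : α = y ^ 4 := by apply Subtype.ext; push_cast; exact hy.symm
    subst hy'
    obtain ⟨z, rfl | rfl⟩ := hres y
    · exfalso
      exact hpnu (isUnit_of_mul_isUnit_left ((isUnit_pow_iff (by norm_num)).1 hαunit))
    have h4 : (1 + (1 + j) * z) ^ 4 - 1 =
        (1 + j) ^ 4 * ((-j) * (z * (z + 1 - j)) * (1 + j * (z * (z + 1 - j)))) := by
      grind
    rw [h4, show (7 : ℕ) = 4 + 3 from rfl, pow_add]
    apply mul_dvd_mul_left
    have hts : ∀ t : O, ∃ s : O, t * (t - j) = (1 + j) * s := by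
      intro t
      obtain ⟨s, rfl | rfl⟩ := hres t
      · exact ⟨s * ((1 + j) * s - j), by ring⟩
      · exact ⟨(1 + (1 + j) * s) * (s - j), by grind⟩
    obtain ⟨t, rfl | rfl⟩ := hres z
    · obtain ⟨s, hs⟩ := hts t
      have e : (1 + j) * t * ((1 + j) * t + 1 - j) = (1 + j) ^ 3 * s := by grind
      rw [e]
      exact Dvd.intro (-j * s * (1 + j * ((1 + j) ^ 3 * s))) (by ring)
    · obtain ⟨s, hs⟩ := hts t
      have e : 1 + j * ((1 + (1 + j) * t) * (1 + (1 + j) * t + 1 - j)) =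
          (1 + j) ^ 3 * (t - j + j * s) := by grind
      rw [e]
      exact (dvd_mul_right _ _).mul_left _
  · rintro ⟨β, hβ⟩
    obtain ⟨x, hx⟩ := hsolve (j * β) (-j * (1 + j) ^ 2)
    obtain ⟨z, hz⟩ := hsolve (j * x) (-j)
    have h2 : (2 : O) = (1 + j) ^ 2 * (-j) := by linear_combination (2 + j) * hj2
    have e1 : (1 + (1 + j) ^ 5 * x) ^ 2 = α := by
      linear_combination (1 + j) ^ 5 * x * h2 - hβ - j * (1 + j) ^ 7 * hx
        + (- (1 + j) ^ 7 * β + (1 + j) ^ 10 * x ^ 2) * hj2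
    have e2 : (1 + (1 + j) ^ 3 * z) ^ 2 = 1 + (1 + j) ^ 5 * x := by
      linear_combination (1 + j) ^ 3 * z * h2 - j * (1 + j) ^ 5 * hz
        + (- (1 + j) ^ 5 * x + (1 + j) ^ 6 * z ^ 2) * hj2
    refine ⟨((1 + (1 + j) ^ 3 * z : O) : K), ?_⟩
    have : (1 + (1 + j) ^ 3 * z) ^ 4 = α := by rw [← e1, ← e2]; ring
    rw [← this]; push_cast; rfl
end

section
/- Let K = ℚ(√−3) with ring of integers O_K and let u, v ∈ O_K^× be units. If x, y, z ∈ O_K are not all zero, generate the unit ideal of O_K, and satisfy x³ + u·y³ + v·z³ = 0, then either x·y·z = 0 or all three of x, y, z are units of O_K. -/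
open NumberField

/-- What we use about the ring of Eisenstein integers. -/
structure EisData (R : Type) [CommRing R] (e : R) : Prop where
  he : e ^ 2 + e + 1 = 0
  prime : Prime (e - 1)
  residue : ∀ x : R, e - 1 ∣ x ∨ e - 1 ∣ x - 1 ∨ e - 1 ∣ x + 1
  units : ∀ u : Rˣ, (u : R) = 1 ∨ (u : R) = -1 ∨ (u : R) = e ∨ (u : R) = -e ∨
    (u : R) = e ^ 2 ∨ (u : R) = -e ^ 2

set_option linter.unusedSectionVars false

namespace EisData

variable {R : Type} [CommRing R] [IsDomain R] {e : R}

lemma e_cube (h : EisData R e) : e ^ 3 = 1 := by linear_combination (e - 1) * h.he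

lemma isUnit_e (h : EisData R e) : IsUnit e :=
  IsUnit.of_mul_eq_one (e ^ 2) (by linear_combination h.e_cube)

lemma lam_sq (h : EisData R e) : (e - 1) ^ 2 = -3 * e := by linear_combination h.he

lemma three_eq (h : EisData R e) : (3 : R) = (e - 1) ^ 2 * (-e ^ 2) := by
  linear_combination (e ^ 2 - 3 * e + 3) * h.he

lemma lam_dvd_three (h : EisData R e) : e - 1 ∣ 3 := ⟨(e - 1) * (-e ^ 2), by
  linear_combination h.three_eq⟩

lemma not_dvd_one (h : EisData R e) : ¬ e - 1 ∣ 1 := fun H => h.prime.not_isUnit (isUnit_of_dvd_one H)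

lemma int_dvd (h : EisData R e) {n : ℤ} (hn : e - 1 ∣ (n : R)) : 3 ∣ n := by
  by_contra H
  apply h.not_dvd_one
  have h3 : e - 1 ∣ ((3 : ℤ) : R) := by exact_mod_cast h.lam_dvd_three
  have hc : IsCoprime (3 : ℤ) n := (Prime.coprime_iff_not_dvd Int.prime_three).2 H
  obtain ⟨a, b, hab⟩ := hc
  have h1 : (a : R) * ((3 : ℤ) : R) + b * n = 1 := by
    rw [← Int.cast_mul, ← Int.cast_mul, ← Int.cast_add, hab, Int.cast_one]
  have h2 := dvd_add (h3.mul_left (a : R)) (hn.mul_left (b : R))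
  rwa [h1] at h2

lemma int_sq_dvd (h : EisData R e) {P Q : ℤ} (H : (e - 1) ^ 2 ∣ (P : R) + Q * e) :
    3 ∣ P ∧ 3 ∣ Q := by
  have h1 : e - 1 ∣ ((P + Q : ℤ) : R) := by
    have := dvd_sub ((dvd_pow_self (e - 1) two_ne_zero).trans H) (dvd_mul_left (e - 1) (Q : R))
    convert this using 1
    push_cast; ring
  obtain ⟨M, hM⟩ := h.int_dvd h1
  have h2 : e - 1 ∣ (Q : R) := by
    have hP : (P : R) = 3 * M - Q := by
      have : P = 3 * M - Q := by linarith
      rw [this]; push_cast; ring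
    have h3 : (e - 1) ^ 2 ∣ (e - 1) * Q := by
      have := dvd_sub H (dvd_mul_right ((e - 1) ^ 2) (-e ^ 2 * M))
      convert this using 1
      rw [hP]
      linear_combination -(M : R) * h.three_eq
    rw [pow_two] at h3
    exact (mul_dvd_mul_iff_left h.prime.ne_zero).1 h3
  have h4 := h.int_dvd h2
  exact ⟨by omega, h4⟩

lemma int_four_dvd (h : EisData R e) {P Q : ℤ} (H : (e - 1) ^ 4 ∣ (P : R) + Q * e) :
    9 ∣ P ∧ 9 ∣ Q := by
  obtain ⟨⟨p, hp⟩, ⟨q, hq⟩⟩ := h.int_sq_dvd ((pow_dvd_pow (e - 1) (by norm_num : 2 ≤ 4)).trans H)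
  have h2 : (e - 1) ^ 2 ∣ (p : R) + q * e := by
    obtain ⟨k, hk⟩ := H
    refine ⟨-e * k, mul_left_cancel₀ (pow_ne_zero 2 h.prime.ne_zero) ?_⟩
    have hk' : 3 * ((p : R) + q * e) = (e - 1) ^ 4 * k := by
      rw [← hk, hp, hq]; push_cast; ring
    linear_combination ((p : R) + q * e) * h.lam_sq - e * hk'
  have := h.int_sq_dvd h2
  omega

lemma unit_form (h : EisData R e) (u : Rˣ) : ∃ p q : ℤ, (u : R) = p + q * e ∧
    (p = 1 ∧ q = 0 ∨ p = -1 ∧ q = 0 ∨ p = 0 ∧ q = 1 ∨ p = 0 ∧ q = -1 ∨ p = -1 ∧ q = -1 ∨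
      p = 1 ∧ q = 1) := by
  rcases h.units u with H | H | H | H | H | H
  · exact ⟨1, 0, by simp [H], by simp⟩
  · exact ⟨-1, 0, by simp [H], by simp⟩
  · exact ⟨0, 1, by simp [H], by simp⟩
  · exact ⟨0, -1, by simp [H], by simp⟩
  · exact ⟨-1, -1, by rw [H]; push_cast; linear_combination h.he, by simp⟩
  · exact ⟨1, 1, by rw [H]; push_cast; linear_combination -h.he, by simp⟩

/-- units congruent to ±1 mod λ² -/
lemma kummer (h : EisData R e) {u : Rˣ} {n : ℤ} (H : (e - 1) ^ 2 ∣ (u : R) + n) :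
    (u : R) ^ 2 = 1 := by
  obtain ⟨p, q, hu, hpq⟩ := h.unit_form u
  have h1 : (e - 1) ^ 2 ∣ ((p + n : ℤ) : R) + q * e := by
    convert H using 1; rw [hu]; push_cast; ring
  have h2 := (h.int_sq_dvd h1).2
  have h3 : q = 0 ∧ (p = 1 ∨ p = -1) := by omega
  rcases h3 with ⟨rfl, rfl | rfl⟩ <;> simp [hu]

lemma two_units (h : EisData R e) {u v : Rˣ} (H : (e - 1) ^ 4 ∣ 1 + (u : R) + v) :
    ((u : R) = e ∧ (v : R) = e ^ 2) ∨ ((u : R) = e ^ 2 ∧ (v : R) = e) := by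
  obtain ⟨p, q, hu, hpq⟩ := h.unit_form u
  obtain ⟨p', q', hv, hpq'⟩ := h.unit_form v
  have h1 : (e - 1) ^ 4 ∣ ((1 + p + p' : ℤ) : R) + ((q + q' : ℤ) : R) * e := by
    convert H using 1; rw [hu, hv]; push_cast; ring
  have h2 := h.int_four_dvd h1
  have h3 : (p = 0 ∧ q = 1 ∧ p' = -1 ∧ q' = -1) ∨ (p = -1 ∧ q = -1 ∧ p' = 0 ∧ q' = 1) := by omega
  rcases h3 with ⟨rfl, rfl, rfl, rfl⟩ | ⟨rfl, rfl, rfl, rfl⟩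
  · left; rw [hu, hv]; push_cast
    exact ⟨by ring, by linear_combination -h.he⟩
  · right; rw [hu, hv]; push_cast
    exact ⟨by linear_combination -h.he, by ring⟩

lemma cube_sub (h : EisData R e) {x : R} (hx : e - 1 ∣ x - 1) : (e - 1) ^ 4 ∣ x ^ 3 - 1 := by
  obtain ⟨y, hy⟩ := hx
  have hx : x = 1 + (e - 1) * y := by linear_combination hy
  have key : e - 1 ∣ y * (y - 1) * (y + 1) := by
    rcases h.residue y with H | H | H
    · exact (H.mul_right _).mul_right _
    · exact (H.mul_left _).mul_right _
    · exact H.mul_left _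
  obtain ⟨k, hk⟩ := key
  have h3 := h.lam_sq
  -- x^3-1 = 3λy + 3λ²y² + λ³y³, 3 = -λ² e²
  refine ⟨k - e ^ 2 * y ^ 2 - (e + 1) * y, ?_⟩
  rw [hx]
  have h4 := h.three_eq
  linear_combination (e - 1) ^ 3 * hk + ((e - 1) * y + (e - 1) ^ 2 * y ^ 2) * h4

lemma cube_pm (h : EisData R e) {x : R} (hx : ¬ e - 1 ∣ x) :
    ∃ s : Rˣ, s ^ 2 = 1 ∧ (∃ n : ℤ, (s : R) = n) ∧ e - 1 ∣ s * x - 1 := by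
  rcases h.residue x with H | H | H
  · exact absurd H hx
  · exact ⟨1, by simp, ⟨1, by simp⟩, by simpa using H⟩
  · refine ⟨-1, by simp, ⟨-1, by simp⟩, ?_⟩
    have := H.neg_right
    convert this using 1
    simp; ring


variable [IsPrincipalIdealRing R]

lemma unit_sq (h : EisData R e) {s : Rˣ} (hs : s ^ 2 = 1) : (s : R) ^ 2 = 1 := by
  rw [← Units.val_pow_eq_pow_val, hs, Units.val_one]

lemma unit_neg_form (h : EisData R e) {s : Rˣ} (hs : s ^ 2 = 1) : (s : R) ^ 3 = s := by
  have := h.unit_sq hs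
  linear_combination (s : R) * this

lemma not_dvd_of_coprime (h : EisData R e) {a b c : R} {u₁ u₂ u₃ : Rˣ} (hab : IsCoprime a b)
    (hc : e - 1 ∣ c) (H : u₁ * a ^ 3 + u₂ * b ^ 3 + u₃ * c ^ 3 = 0) : ¬ e - 1 ∣ a := by
  intro ha
  have hb : e - 1 ∣ u₂ * b ^ 3 := by
    have : (u₂ : R) * b ^ 3 = -(u₁ * a ^ 3 + u₃ * c ^ 3) := by linear_combination H
    rw [this]
    exact (dvd_add ((dvd_pow ha three_ne_zero).mul_left _)
      ((dvd_pow hc three_ne_zero).mul_left _)).neg_right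
  rw [Units.dvd_mul_left] at hb
  exact h.prime.not_isUnit (hab.isUnit_of_dvd' ha (h.prime.dvd_of_dvd_pow hb))

/-- the descent step for the normalised equation -/
lemma descent_step (h : EisData R e) {x y c : R} {u : Rˣ} (hxy : IsCoprime x y)
    (hx : e - 1 ∣ x - 1) (hy : e - 1 ∣ y + 1) (hc : e - 1 ∣ c) (n : ℕ)
    (hn : ¬ (e - 1) ^ (n + 2) ∣ c) (H : x ^ 3 + y ^ 3 = u * c ^ 3)
    (IH : ∀ (a b c : R) (u₁ u₂ u₃ : Rˣ), IsCoprime a b → e - 1 ∣ c → ¬ (e - 1) ^ (n + 1) ∣ c →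
      u₁ * a ^ 3 + u₂ * b ^ 3 + u₃ * c ^ 3 = 0 → False) : False := by
  have hl := h.prime
  obtain ⟨A, hA⟩ : e - 1 ∣ x + y := by
    convert dvd_add hx hy using 1; ring
  obtain ⟨d, rfl⟩ := hc
  have hfac : A * (A + y) * (A - e ^ 2 * y) = u * d ^ 3 := by
    refine mul_left_cancel₀ (pow_ne_zero 3 hl.ne_zero) ?_
    have hx' : x = (e - 1) * A - y := by linear_combination hA
    have e1 : (e - 1) * (A + y) = x + e * y := by rw [hx']; ring
    have e2 : (e - 1) * (A - e ^ 2 * y) = x + e ^ 2 * y := by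
      rw [hx']; linear_combination -y * h.e_cube
    calc (e - 1) ^ 3 * (A * (A + y) * (A - e ^ 2 * y))
        = ((e - 1) * A) * ((e - 1) * (A + y)) * ((e - 1) * (A - e ^ 2 * y)) := by ring
      _ = (x + y) * (x + e * y) * (x + e ^ 2 * y) := by rw [← hA, e1, e2]
      _ = x ^ 3 + y ^ 3 := by
        linear_combination (x ^ 2 * y + x * y ^ 2) * h.he + (x * y ^ 2 + y ^ 3) * h.e_cube
      _ = _ := by rw [H]; ring
  have hd : e - 1 ∣ d := by
    have h1 := h.cube_sub hx
    have h2 : (e - 1) ^ 4 ∣ y ^ 3 + 1 := by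
      have h3 : e - 1 ∣ -y - 1 := by convert hy.neg_right using 1; ring
      convert (h.cube_sub h3).neg_right using 1; ring
    have h3 : (e - 1) ^ 4 ∣ (e - 1) ^ 3 * (u * d ^ 3) := by
      convert dvd_add h1 h2 using 1
      linear_combination -H
    rw [pow_succ (e - 1) 3, mul_dvd_mul_iff_left (pow_ne_zero 3 hl.ne_zero),
      Units.dvd_mul_left] at h3
    exact hl.dvd_of_dvd_pow h3
  have cAy : IsCoprime A y := by
    have : IsCoprime (x + y) y := by
      simpa using hxy.add_mul_right_left 1
    rw [hA] at this
    exact this.of_mul_left_right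
  have cAB : IsCoprime A (A + y) := by
    have := cAy.add_mul_left_right 1
    rwa [mul_one, add_comm] at this
  have cBy : IsCoprime (A + y) y := by
    simpa using cAy.add_mul_right_left 1
  have cAC : IsCoprime A (A - e ^ 2 * y) := by
    have h1 : IsCoprime A (-e ^ 2 * y) :=
      (isCoprime_mul_unit_left_right ((h.isUnit_e.pow 2).neg) _ _).2 cAy
    have := h1.add_mul_left_right 1
    convert this using 1; ring
  have cBC : IsCoprime (A + y) (A - e ^ 2 * y) := by
    have h1 : IsCoprime (A + y) (e * y) :=
      (isCoprime_mul_unit_left_right h.isUnit_e _ _).2 cBy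
    have := h1.add_mul_left_right 1
    convert this using 1; linear_combination -y * h.he
  have hsum : A + e * (A + y) + e ^ 2 * (A - e ^ 2 * y) = 0 := by
    linear_combination A * h.he - y * e * h.e_cube
  generalize A + y = B at *
  generalize A - e ^ 2 * y = C at *
  have hAB := cAC.mul_left cBC
  have h2 : Associated (d ^ 3) (A * B * C) := ⟨u, by rw [hfac, mul_comm]⟩
  obtain ⟨T, h3⟩ := exists_associated_pow_of_associated_pow_mul hAB h2
  obtain ⟨a, ⟨u₁, ha⟩⟩ := exists_associated_pow_of_associated_pow_mul cAB h3
  obtain ⟨b, ⟨u₂, hb⟩⟩ := exists_associated_pow_of_associated_pow_mul cAB.symm (mul_comm A B ▸ h3)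
  obtain ⟨c, ⟨u₃, hc⟩⟩ := exists_associated_pow_of_associated_pow_mul hAB.symm
    (mul_comm (A * B) C ▸ h2)
  obtain ⟨w, hw⟩ := h.isUnit_e
  have cab : IsCoprime a b := by
    rw [← ha, ← hb] at cAB
    exact (IsCoprime.pow_iff three_pos three_pos).1 cAB.of_mul_left_left.of_mul_right_left
  have cac : IsCoprime a c := by
    rw [← ha, ← hc] at cAC
    exact (IsCoprime.pow_iff three_pos three_pos).1 cAC.of_mul_left_left.of_mul_right_left
  have cbc : IsCoprime b c := by
    rw [← hb, ← hc] at cBC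
    exact (IsCoprime.pow_iff three_pos three_pos).1 cBC.of_mul_left_left.of_mul_right_left
  have heq : (u₁ : R) * a ^ 3 + ((w * u₂ : Rˣ) : R) * b ^ 3 + ((w ^ 2 * u₃ : Rˣ) : R) * c ^ 3 = 0 := by
    push_cast
    rw [hw, ← hsum, ← ha, ← hb, ← hc]; ring
  have hprod : ((u₁ * u₂ * u₃ : Rˣ) : R) * (a * b * c) ^ 3 = u * d ^ 3 := by
    push_cast
    rw [← hfac, ← ha, ← hb, ← hc]; ring
  have hnot : ¬ (e - 1) ^ (n + 1) ∣ a * b * c := by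
    intro hdiv
    apply hn
    rw [pow_succ' (e - 1) (n + 1)]
    apply mul_dvd_mul_left
    have h5 := (pow_dvd_pow_of_dvd hdiv 3).mul_left ((u₁ * u₂ * u₃ : Rˣ) : R)
    rw [hprod, Units.dvd_mul_left] at h5
    exact (IsIntegrallyClosed.pow_dvd_pow_iff three_ne_zero).1 h5
  have hdvd : e - 1 ∣ a * b * c := by
    have h5 := (dvd_pow hd three_ne_zero).mul_left (u : R)
    rw [← hprod, Units.dvd_mul_left] at h5
    exact hl.dvd_of_dvd_pow h5
  rcases hl.dvd_or_dvd hdvd with h6 | h6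
  · rcases hl.dvd_or_dvd h6 with h7 | h7
    · exact IH b c a (w * u₂) (w ^ 2 * u₃) u₁ cbc h7 (fun h8 => hnot ((h8.mul_right _).mul_right _))
        (by rw [← heq]; ring)
    · exact IH a c b u₁ (w ^ 2 * u₃) (w * u₂) cac h7 (fun h8 => hnot ((h8.mul_left _).mul_right _))
        (by rw [← heq]; ring)
  · exact IH a b c _ _ _ cab h6 (fun h8 => hnot (h8.mul_left _)) heq

lemma descent (h : EisData R e) (n : ℕ) : ∀ (a b c : R) (u₁ u₂ u₃ : Rˣ), IsCoprime a b →
    e - 1 ∣ c → ¬ (e - 1) ^ (n + 1) ∣ c → u₁ * a ^ 3 + u₂ * b ^ 3 + u₃ * c ^ 3 = 0 → False := by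
  induction n with
  | zero => intro a b c _ _ _ _ h1 h2; simp [h1] at h2
  | succ n IH =>
    intro a b c u₁ u₂ u₃ hab hc hn H
    have ha := h.not_dvd_of_coprime hab hc H
    have hb : ¬ e - 1 ∣ b := h.not_dvd_of_coprime (a := b) (b := a) (u₁ := u₂) (u₂ := u₁) (u₃ := u₃)
      hab.symm hc (by rw [← H]; ring)
    obtain ⟨s, hs, -, hsa⟩ := h.cube_pm ha
    obtain ⟨t, ht, -, htb⟩ := h.cube_pm hb
    have hs3 := h.unit_neg_form hs
    have ht3 := h.unit_neg_form ht
    have hs2 := h.unit_sq hs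
    have ht2 := h.unit_sq ht
    -- the unit `r` with `(s a)^3 + r (t b)^3 + ... = 0`
    obtain ⟨r, hr⟩ : ∃ r : Rˣ, r = u₂ * u₁⁻¹ * s * t := ⟨_, rfl⟩
    obtain ⟨v, hv⟩ : ∃ v : Rˣ, v = u₃ * u₁⁻¹ * s := ⟨_, rfl⟩
    have hinv : (u₁ : R) * ((u₁⁻¹ : Rˣ) : R) = 1 := by simp
    have H1 : (s * a) ^ 3 + r * (t * b) ^ 3 + v * c ^ 3 = 0 := by
      rw [hr, hv, mul_pow, mul_pow, hs3, ht3]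
      push_cast
      linear_combination (s : R) * ((u₁⁻¹ : Rˣ) : R) * H - s * a ^ 3 * hinv
        + (u₂ : R) * ((u₁⁻¹ : Rˣ) : R) * s * b ^ 3 * ht2
    have h1 := h.cube_sub hsa
    have h2 := h.cube_sub htb
    have hpow : (e - 1) ^ 3 ∣ (e - 1) ^ 4 := pow_dvd_pow _ (by norm_num)
    have hr3 : (e - 1) ^ 3 ∣ (r : R) + 1 := by
      have h3 := (pow_dvd_pow_of_dvd hc 3).mul_left (v : R)
      have h4 := dvd_add (dvd_add (hpow.trans h1) ((hpow.trans h2).mul_left (r : R))) h3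
      convert h4.neg_right using 1
      linear_combination H1
    have hr2 : (r : R) ^ 2 = 1 := h.kummer (n := 1)
      (by simpa using (pow_dvd_pow (e - 1) (by norm_num : 2 ≤ 3)).trans hr3)
    have hcop : IsCoprime (s * a) (r * (t * b)) := by
      rw [isCoprime_mul_unit_left_left s.isUnit, isCoprime_mul_unit_left_right r.isUnit,
        isCoprime_mul_unit_left_right t.isUnit]
      exact hab
    refine h.descent_step (u := -v) hcop hsa ?_ hc n hn ?_ IH
    · have h4 := (htb.mul_left (r : R))
      have h5 := dvd_add h4 ((dvd_pow_self (e - 1) three_ne_zero).trans hr3)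
      convert h5 using 1; ring
    · push_cast
      linear_combination H1 + r * (t * b) ^ 3 * hr2

lemma main_one (h : EisData R e) {a b c : R} {u₁ u₂ u₃ : Rˣ} (hab : IsCoprime a b)
    (hc : e - 1 ∣ c) (H : u₁ * a ^ 3 + u₂ * b ^ 3 + u₃ * c ^ 3 = 0) : c = 0 := by
  by_contra h0
  obtain ⟨n, hn⟩ := FiniteMultiplicity.of_not_isUnit h.prime.not_isUnit h0
  exact h.descent n a b c u₁ u₂ u₃ hab hc hn H

lemma main_two (h : EisData R e) {x y z : R} (hxy : IsCoprime x y) (hxz : IsCoprime x z)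
    (hyz : IsCoprime y z) (hx : e - 1 ∣ x - 1) (hy : e - 1 ∣ y - 1) (hz : e - 1 ∣ z - 1)
    (H : x ^ 3 + e * y ^ 3 + e ^ 2 * z ^ 3 = 0) : IsUnit x ∧ IsUnit y ∧ IsUnit z := by
  have cl : ∀ {t : R}, e - 1 ∣ t - 1 → IsCoprime t (e - 1) := by
    rintro t ⟨k, hk⟩
    exact ⟨1, -k, by linear_combination hk⟩
  obtain ⟨a, ha⟩ := h.cube_sub hx
  obtain ⟨b, hb⟩ := h.cube_sub hy
  obtain ⟨c, hc⟩ := h.cube_sub hz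
  have h4 : (e - 1) ^ 4 = 9 * e ^ 2 := by
    rw [show (e - 1) ^ 4 = ((e - 1) ^ 2) ^ 2 by ring, h.lam_sq]; ring
  have h30 : (3 : R) ≠ 0 := by
    rw [h.three_eq]
    exact mul_ne_zero (pow_ne_zero 2 h.prime.ne_zero) (h.isUnit_e.pow 2).neg.ne_zero
  rw [h4] at ha hb hc
  obtain ⟨p, hp⟩ : ∃ p, p = 3 * e ^ 2 * (a + e ^ 2 * b + e * c) := ⟨_, rfl⟩
  obtain ⟨q, hq⟩ : ∃ q, q = 1 + 3 * e ^ 2 * (a + b + c) := ⟨_, rfl⟩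
  have hP : x ^ 3 + e ^ 2 * y ^ 3 + e * z ^ 3 = 3 * p := by
    rw [hp]; linear_combination ha + e ^ 2 * hb + e * hc + h.he
  have hQ : x ^ 3 + y ^ 3 + z ^ 3 = 3 * q := by
    rw [hq]; linear_combination ha + hb + hc
  have hlp : e - 1 ∣ p := by
    rw [hp]; exact (h.lam_dvd_three.mul_right _).mul_right _
  have hpq : q ^ 3 + (-(x * y * z)) ^ 3 + p ^ 3 = 0 := by
    refine mul_left_cancel₀ (pow_ne_zero 3 h30) ?_
    have e0 : 3 * p + 3 * q = 3 * x ^ 3 := by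
      rw [← hP, ← hQ]; linear_combination (y ^ 3 + z ^ 3) * h.he - H
    have e1 : 3 * p + e * (3 * q) = 3 * (e * z ^ 3) := by
      rw [← hP, ← hQ]
      linear_combination (x ^ 3 + y ^ 3) * h.he - e ^ 2 * H + (y ^ 3 + e * z ^ 3) * h.e_cube
    have e2 : 3 * p + e ^ 2 * (3 * q) = 3 * (e ^ 2 * y ^ 3) := by
      rw [← hP, ← hQ]
      linear_combination (x ^ 3 + z ^ 3) * h.he - e * H + z ^ 3 * h.e_cube
    have e3 : (3 * p) ^ 3 + (3 * q) ^ 3 = 27 * (x * y * z) ^ 3 := by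
      calc (3 * p) ^ 3 + (3 * q) ^ 3
          = (3 * p + 3 * q) * (3 * p + e * (3 * q)) * (3 * p + e ^ 2 * (3 * q)) := by
            linear_combination (-27) * (p ^ 2 * q + p * q ^ 2) * h.he
              - 27 * (p * q ^ 2 + q ^ 3) * h.e_cube
        _ = 3 * x ^ 3 * (3 * (e * z ^ 3)) * (3 * (e ^ 2 * y ^ 3)) := by rw [e0, e1, e2]
        _ = _ := by linear_combination 27 * (x * y * z) ^ 3 * h.e_cube
    linear_combination e3
  have cq : IsCoprime q (x * y * z) := by
    have cx : IsCoprime x (3 * q) := by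
      have h1 : IsCoprime x ((e - 1) * z ^ 3) := (cl hx).mul_right hxz.pow_right
      have h2 := h1.neg_right.add_mul_left_right ((1 - e ^ 2) * x ^ 2)
      rw [← hQ]
      convert h2 using 1
      linear_combination e ^ 2 * H - (y ^ 3 + e * z ^ 3) * h.e_cube
    have cz : IsCoprime z (3 * q) := by
      have h1 : IsCoprime z ((e - 1) * y ^ 3) := (cl hz).mul_right hyz.symm.pow_right
      have h2 := h1.neg_right.add_mul_left_right ((1 - e ^ 2) * z ^ 2)
      rw [← hQ]
      convert h2 using 1
      linear_combination H
    have cy : IsCoprime y (3 * q) := by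
      have h1 : IsCoprime y ((e - 1) * x ^ 3) := (cl hy).mul_right hxy.symm.pow_right
      have h3 := h1.neg_right.add_mul_left_right ((1 - e ^ 2) * y ^ 2)
      rw [← hQ]
      convert h3 using 1
      linear_combination e * H - z ^ 3 * h.e_cube
    exact ((cx.of_mul_right_right.mul_left cy.of_mul_right_right).mul_left
      cz.of_mul_right_right).symm
  have hp0 : p = 0 := h.main_one (u₁ := 1) (u₂ := 1) (u₃ := 1) cq.neg_right hlp
    (by simpa using hpq)
  rw [hp0, mul_zero] at hP
  have hyz3 : y ^ 3 = z ^ 3 := by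
    have : e * (e - 1) * (y ^ 3 - z ^ 3) = 0 := by linear_combination hP - H
    have := (mul_eq_zero.1 this).resolve_left (mul_ne_zero h.isUnit_e.ne_zero h.prime.ne_zero)
    linear_combination this
  have hxy3 : x ^ 3 = y ^ 3 := by linear_combination H - e ^ 2 * hyz3.symm - y ^ 3 * h.he
  have hu : ∀ {s t : R}, IsCoprime s t → s ^ 3 = t ^ 3 → IsUnit s := by
    intro s t hst h3
    have : IsCoprime (s ^ 3) (t ^ 3) := hst.pow
    rw [← h3, isCoprime_self] at this
    exact (isUnit_pow_iff three_ne_zero).1 this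
  exact ⟨hu hxy hxy3, hu hyz hyz3, hu hyz.symm hyz3.symm⟩

lemma coprime_of (h : EisData R e) {x y z : R} {u₁ u₂ u₃ : Rˣ}
    (H : u₁ * x ^ 3 + u₂ * y ^ 3 + u₃ * z ^ 3 = 0)
    (hg : ∀ p : R, p ∣ x → p ∣ y → p ∣ z → IsUnit p) : IsCoprime x y := by
  have key : ∀ p : R, Prime p → p ∣ x → p ∣ y → False := by
    intro p hp h1 h2
    have h3 : p ∣ u₃ * z ^ 3 := by
      have : (u₃ : R) * z ^ 3 = -(u₁ * x ^ 3 + u₂ * y ^ 3) := by linear_combination H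
      rw [this]
      exact (dvd_add ((dvd_pow h1 three_ne_zero).mul_left _)
        ((dvd_pow h2 three_ne_zero).mul_left _)).neg_right
    rw [Units.dvd_mul_left] at h3
    exact hp.not_isUnit (hg p h1 h2 (hp.dvd_of_dvd_pow h3))
  refine isCoprime_of_prime_dvd ?_ key
  rintro ⟨rfl, rfl⟩
  exact key _ h.prime (dvd_zero _) (dvd_zero _)

theorem main (h : EisData R e) {x y z : R} {u v : Rˣ}
    (hg : ∀ p : R, p ∣ x → p ∣ y → p ∣ z → IsUnit p)
    (H : x ^ 3 + u * y ^ 3 + v * z ^ 3 = 0) :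
    x * y * z = 0 ∨ (IsUnit x ∧ IsUnit y ∧ IsUnit z) := by
  have H1 : ((1 : Rˣ) : R) * x ^ 3 + u * y ^ 3 + v * z ^ 3 = 0 := by simpa using H
  have H2 : ((1 : Rˣ) : R) * x ^ 3 + v * z ^ 3 + u * y ^ 3 = 0 := by rw [← H1]; ring
  have H3 : u * y ^ 3 + v * z ^ 3 + ((1 : Rˣ) : R) * x ^ 3 = 0 := by rw [← H1]; ring
  have cxy := h.coprime_of H1 hg
  have cxz := h.coprime_of H2 (fun p a b c => hg p a c b)
  have cyz := h.coprime_of H3 (fun p a b c => hg p c a b)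
  by_cases hz : e - 1 ∣ z
  · left; rw [h.main_one cxy hz H1, mul_zero]
  by_cases hy : e - 1 ∣ y
  · left; rw [h.main_one cxz hy H2, mul_zero, zero_mul]
  by_cases hx : e - 1 ∣ x
  · left; rw [h.main_one cyz hx H3, zero_mul, zero_mul]
  right
  obtain ⟨r, hr, -, hrx⟩ := h.cube_pm hx
  obtain ⟨s, hs, -, hsy⟩ := h.cube_pm hy
  obtain ⟨t, ht, -, htz⟩ := h.cube_pm hz
  have hr3 := h.unit_neg_form hr
  have hs3 := h.unit_neg_form hs
  have ht3 := h.unit_neg_form ht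
  have hr2 := h.unit_sq hr
  have hs2 := h.unit_sq hs
  have ht2 := h.unit_sq ht
  have H4 : (r * x) ^ 3 + ((u * r * s : Rˣ) : R) * (s * y) ^ 3
      + ((v * r * t : Rˣ) : R) * (t * z) ^ 3 = 0 := by
    rw [mul_pow, mul_pow, mul_pow, hr3, hs3, ht3]
    push_cast
    linear_combination (r : R) * H + (u : R) * r * y ^ 3 * hs2 + (v : R) * r * z ^ 3 * ht2
  have hsum : (e - 1) ^ 4 ∣ 1 + ((u * r * s : Rˣ) : R) + ((v * r * t : Rˣ) : R) := by
    have h5 := dvd_add (dvd_add (h.cube_sub hrx)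
      ((h.cube_sub hsy).mul_left ((u * r * s : Rˣ) : R)))
      ((h.cube_sub htz).mul_left ((v * r * t : Rˣ) : R))
    convert h5.neg_right using 1
    linear_combination H4
  have cop : ∀ {a b : R} (r s : Rˣ), IsCoprime a b → IsCoprime (r * a) (s * b) := by
    intro a b r s hab
    rw [isCoprime_mul_unit_left_left r.isUnit, isCoprime_mul_unit_left_right s.isUnit]
    exact hab
  rcases h.two_units hsum with ⟨h6, h7⟩ | ⟨h6, h7⟩
  · rw [h6, h7] at H4
    simpa using h.main_two (cop r s cxy) (cop r t cxz) (cop s t cyz) hrx hsy htz H4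
  · rw [h6, h7] at H4
    have := h.main_two (cop r t cxz) (cop r s cxy) (cop t s cyz.symm) hrx htz hsy
      (by rw [← H4]; ring)
    simp only [Units.isUnit_units_mul] at this
    tauto

end EisData

lemma eis_of_cyclotomic (K : Type) [Field K] [NumberField K] [IsCyclotomicExtension {3} ℚ K]
    {ζ : K} (hζ : IsPrimitiveRoot ζ 3) : EisData (𝓞 K) hζ.toInteger where
  he := IsCyclotomicExtension.Rat.Three.eta_sq_add_eta_add_one hζ
  prime := hζ.zeta_sub_one_prime'
  residue := fun x => IsCyclotomicExtension.Rat.Three.lambda_dvd_or_dvd_sub_one_or_dvd_add_one hζ x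
  units := by
    intro u
    have := IsCyclotomicExtension.Rat.Three.Units.mem hζ u
    simp only [List.mem_cons, List.not_mem_nil, or_false] at this
    rcases this with h | h | h | h | h | h <;> rw [h] <;> simp

lemma prim_root (K : Type) [Field K] [NumberField K] (s : K) (hs : s ^ 2 = -3) :
    IsPrimitiveRoot ((-1 + s) / 2) 3 := by
  have h3 : ((-1 + s) / 2) ^ 2 + (-1 + s) / 2 + 1 = 0 := by
    linear_combination hs / 4
  refine IsPrimitiveRoot.mk_of_lt _ (by norm_num) ?_ ?_
  · linear_combination ((-1 + s) / 2 - 1) * h3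
  · intro l hl hl3 hl1
    interval_cases l
    · rw [pow_one] at hl1
      rw [hl1] at h3
      norm_num at h3
    · have h4 : (-1 + s) / 2 = -2 := by linear_combination h3 - hl1
      rw [h4] at h3
      norm_num at h3

lemma cyclo (K : Type) [Field K] [NumberField K] {ζ : K} (hζ : IsPrimitiveRoot ζ 3)
    (hK : Module.finrank ℚ K = 2) : IsCyclotomicExtension {3} ℚ K := by
  have hd : (minpoly ℚ ζ).natDegree = 2 := by
    rw [← Polynomial.cyclotomic_eq_minpoly_rat hζ (by norm_num), Polynomial.natDegree_cyclotomic]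
    decide
  have htop : IntermediateField.adjoin ℚ {ζ} = ⊤ :=
    (Field.primitive_element_iff_minpoly_natDegree_eq ℚ ζ).2 (by rw [hd, hK])
  have halg : Algebra.adjoin ℚ {ζ} = ⊤ := by
    rw [← IntermediateField.adjoin_simple_toSubalgebra_of_isAlgebraic
      (Algebra.IsAlgebraic.isAlgebraic ζ), htop]
    rfl
  refine (IsCyclotomicExtension.iff_singleton 3 ℚ K).2 ⟨⟨ζ, hζ⟩, fun x => ?_⟩
  have hx : x ∈ Algebra.adjoin ℚ {ζ} := by rw [halg]; trivial
  refine Algebra.adjoin_mono ?_ hx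
  simpa using hζ.pow_eq_one

/-- Let `K = ℚ(√-3)` with ring of integers `O_K` and let `u, v` be units of `O_K`.  If
`x, y, z ∈ O_K` are not all zero, generate the unit ideal, and satisfy
`x³ + u y³ + v z³ = 0`, then either `x y z = 0` or `x`, `y`, `z` are all units. -/
theorem twisted_fermat_cubic_points_over_Q_sqrt_neg_three
    (K : Type) [Field K] [NumberField K]
    (s : K) (hs : s ^ 2 = -3) (hK : Module.finrank ℚ K = 2)
    (u v : (𝓞 K)ˣ) (x y z : 𝓞 K)
    (hnz : ¬(x = 0 ∧ y = 0 ∧ z = 0))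
    (hcop : Ideal.span ({x, y, z} : Set (𝓞 K)) = ⊤)
    (heq : x ^ 3 + (u : 𝓞 K) * y ^ 3 + (v : 𝓞 K) * z ^ 3 = 0) :
    x * y * z = 0 ∨ (IsUnit x ∧ IsUnit y ∧ IsUnit z) := by
  have hζ := prim_root K s hs
  have := cyclo K hζ hK
  have := IsCyclotomicExtension.Rat.three_pid K
  refine (eis_of_cyclotomic K hζ).main (fun p hx hy hz => ?_) heq
  have h1 : Ideal.span ({x, y, z} : Set (𝓞 K)) ≤ Ideal.span {p} := by
    rw [Ideal.span_le]
    rintro t (rfl | rfl | rfl) <;> simpa [Ideal.mem_span_singleton]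
  rw [hcop, top_le_iff] at h1
  exact Ideal.span_singleton_eq_top.1 h1
end

section
/- Let K = ℚ(√−3) and let u, v ∈ O_K^× be units of its ring of integers. Then the set of points (x : y : z) in the projective plane ℙ²(K) satisfying x³ + u·y³ + v·z³ = 0 is finite, and its cardinality is either 3 or 9. -/
open NumberField

/-! The descent below (section `eisenstein`) is adapted from Mathlib's `NumberTheory.FLT.Three`. -/

section eisenstein

open NumberField IsCyclotomicExtension.Rat.Three

variable {K : Type*} [Field K]
variable {ζ : K} (hζ : IsPrimitiveRoot ζ 3)

local notation "η" => IsUnit.unit (IsPrimitiveRoot.isUnit (IsPrimitiveRoot.toInteger_isPrimitiveRoot hζ) three_ne_zero)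
local notation "λ" => (IsPrimitiveRoot.toInteger hζ - 1)

/-- `CubicDescent` is the statement that `a ^ 3 + b ^ 3 = u * c ^ 3` has no
nontrivial solutions in `𝓞 K` for all `u : (𝓞 K)ˣ` such that `¬ λ ∣ a`, `¬ λ ∣ b` and `λ ∣ c`.
The reason to consider `CubicDescent` is to make a descent argument working. -/
def CubicDescent : Prop :=
  ∀ a b c : 𝓞 K, ∀ u : (𝓞 K)ˣ, c ≠ 0 → ¬ λ ∣ a → ¬ λ ∣ b → λ ∣ c → IsCoprime a b →
    a ^ 3 + b ^ 3 ≠ u * c ^ 3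

namespace CubicDescent

/-- `Solution'` is a tuple given by a solution to `a ^ 3 + b ^ 3 = u * c ^ 3`,
where `a`, `b`, `c` and `u` are as in `CubicDescent`.
See `Solution` for the actual structure on which we will do the descent. -/
structure Solution' where
  a : 𝓞 K
  b : 𝓞 K
  c : 𝓞 K
  u : (𝓞 K)ˣ
  ha : ¬ λ ∣ a
  hb : ¬ λ ∣ b
  hc : c ≠ 0
  coprime : IsCoprime a b
  hcdvd : λ ∣ c
  H : a ^ 3 + b ^ 3 = u * c ^ 3
attribute [nolint docBlame] Solution'.a
attribute [nolint docBlame] Solution'.b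
attribute [nolint docBlame] Solution'.c
attribute [nolint docBlame] Solution'.u

/-- `Solution` is the same as `Solution'` with the additional assumption that `λ ^ 2 ∣ a + b`. -/
structure Solution extends Solution' hζ where
  hab : λ ^ 2 ∣ a + b

variable {hζ}
variable (S : Solution hζ) (S' : Solution' hζ)

section IsCyclotomicExtension

variable [NumberField K] [IsCyclotomicExtension {3} ℚ K]

/-- For any `S' : Solution'`, the multiplicity of `λ` in `S'.c` is finite. -/
lemma Solution'.multiplicity_lambda_c_finite :
    FiniteMultiplicity (hζ.toInteger - 1) S'.c :=
  .of_not_isUnit hζ.zeta_sub_one_prime'.not_isUnit S'.hc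

/-- Given `S' : Solution'`, `S'.multiplicity` is the multiplicity of `λ` in `S'.c`, as a natural
number. -/
noncomputable def Solution'.multiplicity :=
  _root_.multiplicity (hζ.toInteger - 1) S'.c

/-- Given `S : Solution`, `S.multiplicity` is the multiplicity of `λ` in `S.c`, as a natural
number. -/
noncomputable def Solution.multiplicity := S.toSolution'.multiplicity

/-- We say that `S : Solution` is minimal if for all `S₁ : Solution`, the multiplicity of `λ` in
`S.c` is less or equal than the multiplicity in `S₁.c`. -/
def Solution.isMinimal : Prop := ∀ (S₁ : Solution hζ), S.multiplicity ≤ S₁.multiplicity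

omit [NumberField K] [IsCyclotomicExtension {3} ℚ K] in
include S in
/-- If there is a solution then there is a minimal one. -/
lemma Solution.exists_minimal : ∃ (S₁ : Solution hζ), S₁.isMinimal := by
  classical
  let T := {n | ∃ (S' : Solution hζ), S'.multiplicity = n}
  rcases Nat.find_spec (⟨S.multiplicity, ⟨S, rfl⟩⟩ : T.Nonempty) with ⟨S₁, hS₁⟩
  exact ⟨S₁, fun S'' ↦ hS₁ ▸ Nat.find_min' _ ⟨S'', rfl⟩⟩

/-- Given `S' : Solution'`, then `S'.a` and `S'.b` are both congruent to `1` modulo `λ ^ 4` or are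
both congruent to `-1`. -/
lemma a_cube_b_cube_congr_one_or_neg_one :
    λ ^ 4 ∣ S'.a ^ 3 - 1 ∧ λ ^ 4 ∣ S'.b ^ 3 + 1 ∨ λ ^ 4 ∣ S'.a ^ 3 + 1 ∧ λ ^ 4 ∣ S'.b ^ 3 - 1 := by
  obtain ⟨z, hz⟩ := S'.hcdvd
  rcases lambda_pow_four_dvd_cube_sub_one_or_add_one_of_lambda_not_dvd hζ S'.ha with
    ⟨x, hx⟩ | ⟨x, hx⟩ <;>
  rcases lambda_pow_four_dvd_cube_sub_one_or_add_one_of_lambda_not_dvd hζ S'.hb with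
    ⟨y, hy⟩ | ⟨y, hy⟩
  · exfalso
    replace hζ : IsPrimitiveRoot ζ (3 ^ 1) := by rwa [pow_one]
    refine hζ.toInteger_sub_one_not_dvd_two (by decide) ⟨S'.u * λ ^ 2 * z ^ 3 - λ ^ 3 * (x + y), ?_⟩
    symm
    calc _ = S'.u * (λ * z) ^ 3 - λ ^ 4 * x - λ ^ 4 * y := by ring
    _ = (S'.a ^ 3 + S'.b ^ 3) - (S'.a ^ 3 - 1) - (S'.b ^ 3 - 1) := by rw [← hx, ← hy, ← hz, ← S'.H]
    _ = 2 := by ring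
  · left
    exact ⟨⟨x, hx⟩, ⟨y, hy⟩⟩
  · right
    exact ⟨⟨x, hx⟩, ⟨y, hy⟩⟩
  · exfalso
    replace hζ : IsPrimitiveRoot ζ (3 ^ 1) := by rwa [pow_one]
    refine hζ.toInteger_sub_one_not_dvd_two (by decide) ⟨λ ^ 3 * (x + y) - S'.u * λ ^ 2 * z ^ 3, ?_⟩
    symm
    calc _ = λ ^ 4 * x + λ ^ 4 * y - S'.u * (λ * z) ^ 3 := by ring
    _ = (S'.a ^ 3 + 1) + (S'.b ^ 3 + 1) - (S'.a ^ 3 + S'.b ^ 3) := by rw [← hx, ← hy, ← hz, ← S'.H]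
    _ = 2 := by ring

/-- Given `S' : Solution'`, we have that `λ ^ 4` divides `S'.c ^ 3`. -/
lemma lambda_pow_four_dvd_c_cube : λ ^ 4 ∣ S'.c ^ 3 := by
  rcases a_cube_b_cube_congr_one_or_neg_one S' with
    ⟨⟨x, hx⟩, ⟨y, hy⟩⟩ | ⟨⟨x, hx⟩, ⟨y, hy⟩⟩ <;>
  · refine ⟨S'.u⁻¹ * (x + y), ?_⟩
    symm
    calc _ = S'.u⁻¹ * (λ ^ 4 * x + λ ^ 4 * y) := by ring
    _ = S'.u⁻¹ * (S'.a ^ 3 + S'.b ^ 3) := by rw [← hx, ← hy]; ring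
    _ = S'.u⁻¹ * (S'.u * S'.c ^ 3) := by rw [S'.H]
    _ = S'.c ^ 3 := by simp

/-- Given `S' : Solution'`, we have that `λ ^ 2` divides `S'.c`. -/
lemma lambda_sq_dvd_c : λ ^ 2 ∣ S'.c := by
  have hm := S'.multiplicity_lambda_c_finite
  have := lambda_pow_four_dvd_c_cube S'
  rw [pow_dvd_iff_le_emultiplicity, emultiplicity_pow hζ.zeta_sub_one_prime',
    hm.emultiplicity_eq_multiplicity] at this
  norm_cast at this
  exact (FiniteMultiplicity.pow_dvd_iff_le_multiplicity hm).mpr (by lia)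

/-- Given `S' : Solution'`, we have that `2 ≤ S'.multiplicity`. -/
lemma Solution'.two_le_multiplicity : 2 ≤ S'.multiplicity := by
  simpa [Solution'.multiplicity] using
    S'.multiplicity_lambda_c_finite.le_multiplicity_of_pow_dvd (lambda_sq_dvd_c S')

/-- Given `S : Solution`, we have that `2 ≤ S.multiplicity`. -/
lemma Solution.two_le_multiplicity : 2 ≤ S.multiplicity :=
  S.toSolution'.two_le_multiplicity

end IsCyclotomicExtension

-- This is just a computation and the formulas are too long.
set_option linter.style.whitespace false in
/-- Given `S' : Solution'`, the key factorization of `S'.a ^ 3 + S'.b ^ 3`. -/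
lemma a_cube_add_b_cube_eq_mul :
    S'.a ^ 3 + S'.b ^ 3 = (S'.a + S'.b) * (S'.a + η * S'.b) * (S'.a + η ^ 2 * S'.b) := by
  symm
  calc _ = S'.a^3+S'.a^2*S'.b*(η^2+η+1)+S'.a*S'.b^2*(η^2+η+η^3)+η^3*S'.b^3 := by ring
  _ = S'.a^3+S'.a^2*S'.b*(η^2+η+1)+S'.a*S'.b^2*(η^2+η+1)+S'.b^3 := by
    simp [hζ.toInteger_cube_eq_one]
  _ = S'.a ^ 3 + S'.b ^ 3 := by rw [eta_sq]; ring

section IsCyclotomicExtension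
variable [NumberField K] [IsCyclotomicExtension {3} ℚ K]

/-- Given `S' : Solution'`, we have that `λ ^ 2` divides one amongst `S'.a + S'.b`,
`S'.a + η * S'.b` and `S'.a + η ^ 2 * S'.b`. -/
lemma lambda_sq_dvd_or_dvd_or_dvd :
    λ ^ 2 ∣ S'.a + S'.b ∨ λ ^ 2 ∣ S'.a + η * S'.b ∨ λ ^ 2 ∣ S'.a + η ^ 2 * S'.b := by
  by_contra! ⟨h1, h2, h3⟩
  rw [← emultiplicity_lt_iff_not_dvd] at h1 h2 h3
  have h1' : FiniteMultiplicity (hζ.toInteger - 1) (S'.a + S'.b) :=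
    finiteMultiplicity_iff_emultiplicity_ne_top.2 (fun ht ↦ by simp [ht] at h1)
  have h2' : FiniteMultiplicity (hζ.toInteger - 1) (S'.a + η * S'.b) := by
    refine finiteMultiplicity_iff_emultiplicity_ne_top.2 (fun ht ↦ ?_)
    rw [coe_eta] at ht
    simp [ht] at h2
  have h3' : FiniteMultiplicity (hζ.toInteger - 1) (S'.a + η ^ 2 * S'.b) := by
    refine finiteMultiplicity_iff_emultiplicity_ne_top.2 (fun ht ↦ ?_)
    rw [coe_eta] at ht
    simp [ht] at h3
  rw [h1'.emultiplicity_eq_multiplicity, Nat.cast_lt] at h1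
  rw [h2'.emultiplicity_eq_multiplicity, Nat.cast_lt] at h2
  rw [h3'.emultiplicity_eq_multiplicity, Nat.cast_lt] at h3
  have := (pow_dvd_pow_of_dvd (lambda_sq_dvd_c S') 3).mul_left S'.u
  rw [← pow_mul, ← S'.H, a_cube_add_b_cube_eq_mul, pow_dvd_iff_le_emultiplicity,
    emultiplicity_mul hζ.zeta_sub_one_prime', emultiplicity_mul hζ.zeta_sub_one_prime',
      h1'.emultiplicity_eq_multiplicity, h2'.emultiplicity_eq_multiplicity,
      h3'.emultiplicity_eq_multiplicity, ← Nat.cast_add, ← Nat.cast_add, Nat.cast_le] at this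
  lia

open Units in
/-- Given `S' : Solution'`, we may assume that `λ ^ 2` divides `S'.a + S'.b ∨ λ ^ 2` (see also the
result below). -/
lemma ex_cube_add_cube_eq_and_isCoprime_and_not_dvd_and_dvd :
    ∃ (a' b' : 𝓞 K), a' ^ 3 + b' ^ 3 = S'.u * S'.c ^ 3 ∧ IsCoprime a' b' ∧ ¬ λ ∣ a' ∧
      ¬ λ ∣ b' ∧ λ ^ 2 ∣ a' + b' := by
  rcases lambda_sq_dvd_or_dvd_or_dvd S' with h | h | h
  · exact ⟨S'.a, S'.b, S'.H, S'.coprime, S'.ha, S'.hb, h⟩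
  · refine ⟨S'.a, η * S'.b, ?_, ?_, S'.ha, fun ⟨x, hx⟩ ↦ S'.hb ⟨η ^ 2 * x, ?_⟩, h⟩
    · simp [mul_pow, hζ.toInteger_cube_eq_one, one_mul, S'.H]
    · refine (isCoprime_mul_unit_left_right (Units.isUnit η) _ _).2 S'.coprime
    · rw [mul_comm _ x, ← mul_assoc, ← hx, mul_comm _ S'.b, mul_assoc, ← pow_succ', coe_eta,
        hζ.toInteger_cube_eq_one, mul_one]
  · refine ⟨S'.a, η ^ 2 * S'.b, ?_, ?_, S'.ha, fun ⟨x, hx⟩ ↦ S'.hb ⟨η * x, ?_⟩, h⟩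
    · rw [mul_pow, ← pow_mul, mul_comm 2, pow_mul, coe_eta, hζ.toInteger_cube_eq_one, one_pow,
        one_mul, S'.H]
    · exact (isCoprime_mul_unit_left_right ((Units.isUnit η).pow _) _ _).2 S'.coprime
    · rw [mul_comm _ x, ← mul_assoc, ← hx, mul_comm _ S'.b, mul_assoc, ← pow_succ, coe_eta,
        hζ.toInteger_cube_eq_one, mul_one]

/-- Given `S' : Solution'`, then there is `S₁ : Solution` such that
`S₁.multiplicity = S'.multiplicity`. -/
lemma exists_Solution_of_Solution' : ∃ (S₁ : Solution hζ), S₁.multiplicity = S'.multiplicity := by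
  obtain ⟨a, b, H, coprime, ha, hb, hab⟩ := ex_cube_add_cube_eq_and_isCoprime_and_not_dvd_and_dvd S'
  exact ⟨
  { a := a
    b := b
    c := S'.c
    u := S'.u
    ha := ha
    hb := hb
    hc := S'.hc
    coprime := coprime
    hcdvd := S'.hcdvd
    H := H
    hab := hab }, rfl⟩

end IsCyclotomicExtension

namespace Solution

lemma a_add_eta_mul_b : S.a + η * S.b = (S.a + S.b) + λ * S.b := by rw [coe_eta]; ring

/-- Given `(S : Solution)`, we have that `λ ∣ (S.a + η * S.b)`. -/
lemma lambda_dvd_a_add_eta_mul_b : λ ∣ (S.a + η * S.b) :=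
  a_add_eta_mul_b S ▸ dvd_add (dvd_trans (dvd_pow_self _ (by decide)) S.hab) ⟨S.b, by rw [mul_comm]⟩

/-- Given `(S : Solution)`, we have that `λ ∣ (S.a + η ^ 2 * S.b)`. -/
lemma lambda_dvd_a_add_eta_sq_mul_b : λ ∣ (S.a + η ^ 2 * S.b) := by
  rw [show S.a + η ^ 2 * S.b = (S.a + S.b) + λ ^ 2 * S.b + 2 * λ * S.b by rw [coe_eta]; ring]
  exact dvd_add (dvd_add (dvd_trans (dvd_pow_self _ (by decide)) S.hab) ⟨λ * S.b, by ring⟩)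
    ⟨2 * S.b, by ring⟩

section IsCyclotomicExtension

variable [NumberField K] [IsCyclotomicExtension {3} ℚ K]

/-- Given `(S : Solution)`, we have that `λ ^ 2` does not divide `S.a + η * S.b`. -/
lemma lambda_sq_not_dvd_a_add_eta_mul_b : ¬ λ ^ 2 ∣ (S.a + η * S.b) := by
  simp_rw [a_add_eta_mul_b, dvd_add_right S.hab, pow_two, mul_dvd_mul_iff_left
    hζ.zeta_sub_one_prime'.ne_zero, S.hb, not_false_eq_true]

/-- Given `(S : Solution)`, we have that `λ ^ 2` does not divide `S.a + η ^ 2 * S.b`. -/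
lemma lambda_sq_not_dvd_a_add_eta_sq_mul_b : ¬ λ ^ 2 ∣ (S.a + η ^ 2 * S.b) := by
  intro ⟨k, hk⟩
  rcases S.hab with ⟨k', hk'⟩
  refine S.hb ⟨(k - k') * (-η), ?_⟩
  rw [show S.a + η ^ 2 * S.b = S.a + S.b - S.b + η ^ 2 * S.b by ring, hk',
    show λ ^ 2 * k' - S.b + η ^ 2 * S.b = λ * (S.b * (η + 1) + λ * k') by rw [coe_eta]; ring,
    pow_two, mul_assoc] at hk
  simp only [mul_eq_mul_left_iff, hζ.zeta_sub_one_prime'.ne_zero, or_false] at hk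
  apply_fun (· * -↑η) at hk
  rw [show (S.b * (η + 1) + λ * k') * -η = (-S.b) * (η ^ 2 + η + 1 - 1) - η * λ * k' by ring,
    eta_sq, show -S.b * (-↑η - 1 + ↑η + 1 - 1) = S.b by ring, sub_eq_iff_eq_add] at hk
  rw [hk]
  ring

attribute [local instance] IsCyclotomicExtension.Rat.three_pid
attribute [local instance] UniqueFactorizationMonoid.toGCDMonoid

/-- If `p : 𝓞 K` is a prime that divides both `S.a + S.b` and `S.a + η * S.b`, then `p`
is associated with `λ`. -/
lemma associated_of_dvd_a_add_b_of_dvd_a_add_eta_mul_b {p : 𝓞 K} (hp : Prime p)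
    (hpab : p ∣ S.a + S.b) (hpaηb : p ∣ S.a + η * S.b) : Associated p λ := by
  suffices p_lam : p ∣ λ from hp.associated_of_dvd hζ.zeta_sub_one_prime' p_lam
  rw [← one_mul S.a, ← one_mul S.b] at hpab
  rw [← one_mul S.a] at hpaηb
  have := dvd_mul_sub_mul_mul_gcd_of_dvd hpab hpaηb
  rwa [one_mul, one_mul, coe_eta, IsUnit.dvd_mul_right <| (gcd_isUnit_iff _ _).2 S.coprime] at this

/-- If `p : 𝓞 K` is a prime that divides both `S.a + S.b` and `S.a + η ^ 2 * S.b`, then `p`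
is associated with `λ`. -/
lemma associated_of_dvd_a_add_b_of_dvd_a_add_eta_sq_mul_b {p : 𝓞 K} (hp : Prime p)
    (hpab : p ∣ (S.a + S.b)) (hpaηsqb : p ∣ (S.a + η ^ 2 * S.b)) : Associated p λ := by
  suffices p_lam : p ∣ λ from hp.associated_of_dvd hζ.zeta_sub_one_prime' p_lam
  rw [← one_mul S.a, ← one_mul S.b] at hpab
  rw [← one_mul S.a] at hpaηsqb
  have := dvd_mul_sub_mul_mul_gcd_of_dvd hpab hpaηsqb
  rw [one_mul, mul_one, IsUnit.dvd_mul_right <| (gcd_isUnit_iff _ _).2 S.coprime, ← dvd_neg] at this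
  convert! dvd_mul_of_dvd_left this η using 1
  rw [eta_sq, neg_sub, sub_mul, sub_mul, neg_mul, ← pow_two, eta_sq, coe_eta]
  ring

/-- If `p : 𝓞 K` is a prime that divides both `S.a + η * S.b` and `S.a + η ^ 2 * S.b`, then `p`
is associated with `λ`. -/
lemma associated_of_dvd_a_add_eta_mul_b_of_dvd_a_add_eta_sq_mul_b {p : 𝓞 K} (hp : Prime p)
    (hpaηb : p ∣ S.a + η * S.b) (hpaηsqb : p ∣ S.a + η ^ 2 * S.b) : Associated p λ := by
  suffices p_lam : p ∣ λ from hp.associated_of_dvd hζ.zeta_sub_one_prime' p_lam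
  rw [← one_mul S.a] at hpaηb
  rw [← one_mul S.a] at hpaηsqb
  have := dvd_mul_sub_mul_mul_gcd_of_dvd hpaηb hpaηsqb
  rw [one_mul, mul_one, IsUnit.dvd_mul_right <| (gcd_isUnit_iff _ _).2 S.coprime] at this
  convert! (dvd_mul_of_dvd_left (dvd_mul_of_dvd_left this η) η) using 1
  symm
  calc _ = (-η.1 - 1 - η) * (-η - 1) := by rw [eta_sq, mul_assoc, ← pow_two, eta_sq]
  _ = 2 * η.1 ^ 2 + 3 * η + 1 := by ring
  _ = λ := by rw [eta_sq, coe_eta]; ring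

end IsCyclotomicExtension

/-- Given `S : Solution`, we let `S.y` be any element such that `S.a + η * S.b = λ * S.y` -/
noncomputable def y := (lambda_dvd_a_add_eta_mul_b S).choose
lemma y_spec : S.a + η * S.b = λ * S.y :=
  (lambda_dvd_a_add_eta_mul_b S).choose_spec

/-- Given `S : Solution`, we let `S.z` be any element such that `S.a + η ^ 2 * S.b = λ * S.z` -/
noncomputable def z := (lambda_dvd_a_add_eta_sq_mul_b S).choose
lemma z_spec : S.a + η ^ 2 * S.b = λ * S.z :=
  (lambda_dvd_a_add_eta_sq_mul_b S).choose_spec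

variable [NumberField K] [IsCyclotomicExtension {3} ℚ K]

lemma lambda_not_dvd_y : ¬ λ ∣ S.y := fun h ↦ by
  replace h := mul_dvd_mul_left ((η : 𝓞 K) - 1) h
  rw [coe_eta, ← y_spec, ← pow_two] at h
  exact lambda_sq_not_dvd_a_add_eta_mul_b _ h

lemma lambda_not_dvd_z : ¬ λ ∣ S.z := fun h ↦ by
  replace h := mul_dvd_mul_left ((η : 𝓞 K) - 1) h
  rw [coe_eta, ← z_spec, ← pow_two] at h
  exact lambda_sq_not_dvd_a_add_eta_sq_mul_b _ h

/-- We have that `λ ^ (3*S.multiplicity-2)` divides `S.a + S.b`. -/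
lemma lambda_pow_dvd_a_add_b : λ ^ (3 * S.multiplicity - 2) ∣ S.a + S.b := by
  have h : λ ^ S.multiplicity ∣ S.c := pow_multiplicity_dvd _ _
  replace h : (λ ^ multiplicity S) ^ 3 ∣ S.u * S.c ^ 3 := by simp [h]
  rw [← S.H, a_cube_add_b_cube_eq_mul, ← pow_mul, mul_comm, y_spec, z_spec] at h
  apply hζ.zeta_sub_one_prime'.pow_dvd_of_dvd_mul_left _ S.lambda_not_dvd_z
  apply hζ.zeta_sub_one_prime'.pow_dvd_of_dvd_mul_left _ S.lambda_not_dvd_y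
  have := S.two_le_multiplicity
  rw [show 3 * multiplicity S = 3 * multiplicity S - 2 + 1 + 1 by lia, pow_succ, pow_succ,
    show (S.a + S.b) * (λ * y S) * (λ * z S) = (S.a + S.b) * y S * z S * λ * λ by ring] at h
  simp only [mul_dvd_mul_iff_right hζ.zeta_sub_one_prime'.ne_zero] at h
  rwa [show (S.a + S.b) * y S * z S = y S * (z S * (S.a + S.b)) by ring] at h

/-- Given `S : Solution`, we let `S.x` be any element such that
`S.a + S.b = λ ^ (3*S.multiplicity-2) * S.x` -/
noncomputable def x := (lambda_pow_dvd_a_add_b S).choose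
lemma x_spec : S.a + S.b = λ ^ (3 * S.multiplicity - 2) * S.x :=
  (lambda_pow_dvd_a_add_b S).choose_spec

/-- Given `S : Solution`, we let `S.w` be any element such that `S.c = λ ^ S.multiplicity * S.w` -/
noncomputable def w :=
  (pow_multiplicity_dvd (hζ.toInteger - 1) S.c).choose

omit [NumberField K] [IsCyclotomicExtension {3} ℚ K] in
lemma w_spec : S.c = λ ^ S.multiplicity * S.w :=
  (pow_multiplicity_dvd (hζ.toInteger - 1) S.c).choose_spec

lemma lambda_not_dvd_w : ¬ λ ∣ S.w := fun h ↦ by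
  refine S.toSolution'.multiplicity_lambda_c_finite.not_pow_dvd_of_multiplicity_lt
    (lt_add_one S.multiplicity) ?_
  rw [pow_succ', mul_comm]
  exact S.w_spec ▸ (mul_dvd_mul_left (λ ^ S.multiplicity) h)

lemma lambda_not_dvd_x : ¬ λ ∣ S.x := fun h ↦ by
  replace h := mul_dvd_mul_left (λ ^ (3 * S.multiplicity - 2)) h
  rw [mul_comm, ← x_spec] at h
  replace h :=
    mul_dvd_mul (mul_dvd_mul h S.lambda_dvd_a_add_eta_mul_b) S.lambda_dvd_a_add_eta_sq_mul_b
  simp only [← a_cube_add_b_cube_eq_mul, S.H, w_spec, Units.isUnit, IsUnit.dvd_mul_left] at h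
  rw [← pow_succ', mul_comm, ← mul_assoc, ← pow_succ'] at h
  have := S.two_le_multiplicity
  rw [show 3 * multiplicity S - 2 + 1 + 1 = 3 * multiplicity S by lia, mul_pow, ← pow_mul,
    mul_comm _ 3, mul_dvd_mul_iff_left _] at h
  · exact lambda_not_dvd_w _ <| hζ.zeta_sub_one_prime'.dvd_of_dvd_pow h
  · simp [hζ.zeta_sub_one_prime'.ne_zero]

attribute [local instance] IsCyclotomicExtension.Rat.three_pid

lemma isCoprime_helper {r s t w : 𝓞 K} (hr : ¬ λ ∣ r) (hs : ¬ λ ∣ s)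
    (Hp : ∀ {p}, Prime p → p ∣ t → p ∣ w → Associated p λ) (H₁ : ∀ {q}, q ∣ r → q ∣ t)
    (H₂ : ∀ {q}, q ∣ s → q ∣ w) : IsCoprime r s := by
  refine isCoprime_of_prime_dvd (not_and.2 (fun _ hz ↦ hs (by simp [hz])))
    (fun p hp p_dvd_r p_dvd_s ↦ hr ?_)
  rwa [← Associated.dvd_iff_dvd_left <| Hp hp (H₁ p_dvd_r) (H₂ p_dvd_s)]

lemma isCoprime_x_y : IsCoprime S.x S.y :=
  isCoprime_helper (lambda_not_dvd_x S) (lambda_not_dvd_y S)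
    (associated_of_dvd_a_add_b_of_dvd_a_add_eta_mul_b S) (fun hq ↦ x_spec S ▸ hq.mul_left _)
      (fun hq ↦ y_spec S ▸ hq.mul_left _)

lemma isCoprime_x_z : IsCoprime S.x S.z :=
  isCoprime_helper (lambda_not_dvd_x S) (lambda_not_dvd_z S)
    (associated_of_dvd_a_add_b_of_dvd_a_add_eta_sq_mul_b S) (fun hq ↦ x_spec S ▸ hq.mul_left _)
      (fun hq ↦ z_spec S ▸ hq.mul_left _)

lemma isCoprime_y_z : IsCoprime S.y S.z :=
  isCoprime_helper (lambda_not_dvd_y S) (lambda_not_dvd_z S)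
    (associated_of_dvd_a_add_eta_mul_b_of_dvd_a_add_eta_sq_mul_b S)
    (fun hq ↦ y_spec S ▸ hq.mul_left _) (fun hq ↦ z_spec S ▸ hq.mul_left _)

lemma x_mul_y_mul_z_eq_u_mul_w_cube : S.x * S.y * S.z = S.u * S.w ^ 3 := by
  suffices hh : λ ^ (3 * S.multiplicity - 2) * S.x * λ * S.y * λ * S.z =
      S.u * λ ^ (3 * S.multiplicity) * S.w ^ 3 by
    rw [show λ ^ (3 * multiplicity S - 2) * x S * λ * y S * λ * z S =
      λ ^ (3 * multiplicity S - 2) * λ * λ * x S * y S * z S by ring] at hh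
    have := S.two_le_multiplicity
    rw [mul_comm _ (λ ^ (3 * multiplicity S)), ← pow_succ, ← pow_succ,
      show 3 * multiplicity S - 2 + 1 + 1 = 3 * multiplicity S by lia, mul_assoc, mul_assoc,
      mul_assoc] at hh
    simp only [mul_eq_mul_left_iff, pow_eq_zero_iff', hζ.zeta_sub_one_prime'.ne_zero, ne_eq,
      mul_eq_zero, OfNat.ofNat_ne_zero, false_or, false_and, or_false] at hh
    convert! hh using 1
    ring
  simp only [← x_spec, mul_assoc, ← y_spec, ← z_spec]
  rw [mul_comm 3, pow_mul, ← mul_pow, ← w_spec, ← S.H, a_cube_add_b_cube_eq_mul]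
  ring

lemma exists_cube_associated :
    (∃ X, Associated (X ^ 3) S.x) ∧ (∃ Y, Associated (Y ^ 3) S.y) ∧
      ∃ Z, Associated (Z ^ 3) S.z := by
  have h₁ := S.isCoprime_x_z.mul_left S.isCoprime_y_z
  have h₂ : Associated (S.w ^ 3) (S.x * S.y * S.z) :=
    ⟨S.u, by rw [x_mul_y_mul_z_eq_u_mul_w_cube S, mul_comm]⟩
  obtain ⟨T, h₃⟩ := exists_associated_pow_of_associated_pow_mul h₁ h₂
  exact ⟨exists_associated_pow_of_associated_pow_mul S.isCoprime_x_y h₃,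
    exists_associated_pow_of_associated_pow_mul S.isCoprime_x_y.symm (mul_comm _ S.x ▸ h₃),
    exists_associated_pow_of_associated_pow_mul h₁.symm (mul_comm _ S.z ▸ h₂)⟩

/-- Given `S : Solution`, we let `S.u₁` and `S.X` be any elements such that
`S.X ^ 3 * S.u₁ = S.x` -/
noncomputable def X := (exists_cube_associated S).1.choose
noncomputable def u₁ := (exists_cube_associated S).1.choose_spec.choose
lemma X_u₁_spec : S.X ^ 3 * S.u₁ = S.x :=
  (exists_cube_associated S).1.choose_spec.choose_spec

/-- Given `S : Solution`, we let `S.u₂` and `S.Y` be any elements such that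
`S.Y ^ 3 * S.u₂ = S.y` -/
noncomputable def Y := (exists_cube_associated S).2.1.choose
noncomputable def u₂ := (exists_cube_associated S).2.1.choose_spec.choose
lemma Y_u₂_spec : S.Y ^ 3 * S.u₂ = S.y :=
  (exists_cube_associated S).2.1.choose_spec.choose_spec

/-- Given `S : Solution`, we let `S.u₃` and `S.Z` be any elements such that
`S.Z ^ 3 * S.u₃ = S.z` -/
noncomputable def Z := (exists_cube_associated S).2.2.choose
noncomputable def u₃ := (exists_cube_associated S).2.2.choose_spec.choose
lemma Z_u₃_spec : S.Z ^ 3 * S.u₃ = S.z :=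
  (exists_cube_associated S).2.2.choose_spec.choose_spec

lemma X_ne_zero : S.X ≠ 0 :=
  fun h ↦ lambda_not_dvd_x S <| by simp [← X_u₁_spec, h]

lemma lambda_not_dvd_X : ¬ λ ∣ S.X :=
  fun h ↦ lambda_not_dvd_x S <| X_u₁_spec S ▸ dvd_mul_of_dvd_left (dvd_pow h (by decide)) _

lemma lambda_not_dvd_Y : ¬ λ ∣ S.Y :=
  fun h ↦ lambda_not_dvd_y S <| Y_u₂_spec S ▸ dvd_mul_of_dvd_left (dvd_pow h (by decide)) _

lemma lambda_not_dvd_Z : ¬ λ ∣ S.Z :=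
  fun h ↦ lambda_not_dvd_z S <| Z_u₃_spec S ▸ dvd_mul_of_dvd_left (dvd_pow h (by decide)) _

lemma isCoprime_Y_Z : IsCoprime S.Y S.Z := by
  rw [← IsCoprime.pow_iff (m := 3) (n := 3) (by decide) (by decide),
    ← isCoprime_mul_unit_right_left S.u₂.isUnit, ← isCoprime_mul_unit_right_right S.u₃.isUnit,
    Y_u₂_spec, Z_u₃_spec]
  exact isCoprime_y_z S

-- This is just a computation and the formulas are too long.
set_option linter.style.whitespace false in
lemma formula1 : S.X^3*S.u₁*λ^(3*S.multiplicity-2)+S.Y^3*S.u₂*λ*η+S.Z^3*S.u₃*λ*η^2 = 0 := by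
  rw [X_u₁_spec, Y_u₂_spec, Z_u₃_spec, mul_comm S.x, ← x_spec, mul_comm S.y, ← y_spec, mul_comm S.z,
    ← z_spec, eta_sq]
  calc _ = S.a+S.b+η^2*S.b-S.a+η^2*S.b+2*η*S.b+S.b := by ring
  _ = 0 := by rw [eta_sq]; ring

/-- Let `u₄ := η * S.u₃ * S.u₂⁻¹` -/
noncomputable def u₄ := η * S.u₃ * S.u₂⁻¹
lemma u₄_def : S.u₄ = η * S.u₃ * S.u₂⁻¹ := rfl
/-- Let `u₅ := -η ^ 2 * S.u₁ * S.u₂⁻¹` -/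
noncomputable def u₅ := -η ^ 2 * S.u₁ * S.u₂⁻¹
lemma u₅_def : S.u₅ = -η ^ 2 * S.u₁ * S.u₂⁻¹ := rfl

example (a b : 𝓞 K) (ha : a ≠ 0) (hb : b ≠ 0) : a * b ≠ 0 := by
  exact mul_ne_zero ha hb

-- This is just a computation and the formulas are too long.
set_option linter.style.whitespace false in
lemma formula2 :
    S.Y ^ 3 + S.u₄ * S.Z ^ 3 = S.u₅ * (λ ^ (S.multiplicity - 1) * S.X) ^ 3 := by
  rw [u₅_def, neg_mul, neg_mul, Units.val_neg, neg_mul, eq_neg_iff_add_eq_zero, add_assoc,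
    add_comm (S.u₄ * S.Z ^ 3), ← add_assoc, add_comm (S.Y ^ 3)]
  apply mul_right_cancel₀ <| mul_ne_zero
    (mul_ne_zero hζ.zeta_sub_one_prime'.ne_zero S.u₂.isUnit.ne_zero) (Units.isUnit η).ne_zero
  simp only [zero_mul, add_mul]
  rw [← formula1 S]
  congrm ?_ + ?_ + ?_
  · have : (S.multiplicity-1)*3+1 = 3*S.multiplicity-2 := by have := S.two_le_multiplicity; lia
    calc _ = S.X^3 *(S.u₂*S.u₂⁻¹)*(η^3*S.u₁)*(λ^((S.multiplicity-1)*3)*λ) := by push_cast; ring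
    _ = S.X^3*S.u₁*λ^(3*S.multiplicity-2) := by simp [hζ.toInteger_cube_eq_one, ← pow_succ, this]
  · ring
  · simp only [u₄_def, inv_eq_one_div, mul_div_assoc', mul_one, val_div_eq_divp, Units.val_mul,
      IsUnit.unit_spec, divp_mul_eq_mul_divp, divp_eq_iff_mul_eq]
    ring

-- This is just a computation and the formulas are too long.
set_option linter.style.whitespace false in
lemma lambda_sq_div_u₅_mul : λ ^ 2 ∣ S.u₅ * (λ ^ (S.multiplicity - 1) * S.X) ^ 3 := by
  use λ^(3*S.multiplicity-5)*S.u₅*(S.X^3)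
  have : 3*(S.multiplicity-1) = 2+(3*S.multiplicity-5) := by have := S.two_le_multiplicity; lia
  calc _ = λ^(3*(S.multiplicity-1))*S.u₅*S.X^3 := by ring
  _ = λ^2*λ^(3*S.multiplicity-5)*S.u₅*S.X^3 := by rw [this, pow_add]
  _ = λ^2*(λ^(3*S.multiplicity-5)*S.u₅*S.X^3) := by ring

lemma u₄_eq_one_or_neg_one : S.u₄ = 1 ∨ S.u₄ = -1 := by
  have : λ ^ 2 ∣ λ ^ 4 := ⟨λ ^ 2, by ring⟩
  have h := S.lambda_sq_div_u₅_mul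
  apply IsCyclotomicExtension.Rat.Three.eq_one_or_neg_one_of_unit_of_congruent hζ
  rcases h with ⟨X, hX⟩
  rcases lambda_pow_four_dvd_cube_sub_one_or_add_one_of_lambda_not_dvd hζ S.lambda_not_dvd_Y with
    HY | HY <;> rcases lambda_pow_four_dvd_cube_sub_one_or_add_one_of_lambda_not_dvd
      hζ S.lambda_not_dvd_Z with HZ | HZ <;> replace HY := this.trans HY <;> replace HZ :=
      this.trans HZ <;> rcases HY with ⟨Y, hY⟩ <;> rcases HZ with ⟨Z, hZ⟩
  · refine ⟨-1, X - Y - S.u₄ * Z, ?_⟩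
    rw [show λ ^ 2 * (X - Y - S.u₄ * Z) = λ ^ 2 * X - λ ^ 2 * Y - S.u₄ * (λ ^ 2 * Z) by ring,
      ← hX, ← hY, ← hZ, ← formula2]
    ring
  · refine ⟨1, -X + Y + S.u₄ * Z, ?_⟩
    rw [show λ ^ 2 * (-X + Y + S.u₄ * Z) = -(λ ^ 2 * X - λ ^ 2 * Y - S.u₄ * (λ ^ 2 * Z)) by ring,
      ← hX, ← hY, ← hZ, ← formula2]
    ring
  · refine ⟨1, X - Y - S.u₄ * Z, ?_⟩
    rw [show λ ^ 2 * (X - Y - S.u₄ * Z) = λ ^ 2 * X - λ ^ 2 * Y - S.u₄ * (λ ^ 2 * Z) by ring,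
      ← hX, ← hY, ← hZ, ← formula2]
    ring
  · refine ⟨-1, -X + Y + S.u₄ * Z, ?_⟩
    rw [show λ ^ 2 * (-X + Y + S.u₄ * Z) = -(λ ^ 2 * X - λ ^ 2 * Y - S.u₄ * (λ ^ 2 * Z)) by ring,
      ← hX, ← hY, ← hZ, ← formula2]
    ring

lemma u₄_sq : S.u₄ ^ 2 = 1 := by
  rcases S.u₄_eq_one_or_neg_one with h | h <;> simp [h]

/-- Given `S : Solution`, we have that
`S.Y ^ 3 + (S.u₄ * S.Z) ^ 3 = S.u₅ * (λ ^ (S.multiplicity - 1) * S.X) ^ 3`. -/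
lemma formula3 :
    S.Y ^ 3 + (S.u₄ * S.Z) ^ 3 = S.u₅ * (λ ^ (S.multiplicity - 1) * S.X) ^ 3 :=
  calc S.Y ^ 3 + (S.u₄ * S.Z) ^ 3 = S.Y ^ 3 + S.u₄ ^ 2 * S.u₄ * S.Z ^ 3 := by ring
  _ = S.Y ^ 3 + S.u₄ * S.Z ^ 3 := by simp [← Units.val_pow_eq_pow_val, S.u₄_sq]
  _ = S.u₅ * (λ ^ (S.multiplicity - 1) * S.X) ^ 3 := S.formula2

/-- Given `S : Solution`, we construct `S₁ : Solution'`, with smaller multiplicity of `λ` in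
  `c` (see `Solution'_descent_multiplicity_lt` below.). -/
noncomputable def Solution'_descent : Solution' hζ where
  a := S.Y
  b := S.u₄ * S.Z
  c := λ ^ (S.multiplicity - 1) * S.X
  u := S.u₅
  ha := S.lambda_not_dvd_Y
  hb := fun h ↦ S.lambda_not_dvd_Z <| Units.dvd_mul_left.1 h
  hc := fun h ↦ S.X_ne_zero <| by simpa [hζ.zeta_sub_one_prime'.ne_zero] using h
  coprime := (isCoprime_mul_unit_left_right S.u₄.isUnit _ _).2 S.isCoprime_Y_Z
  hcdvd := by
    refine dvd_mul_of_dvd_left (dvd_pow_self _ (fun h ↦ ?_)) _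
    rw [Nat.sub_eq_iff_eq_add (le_trans (by simp) S.two_le_multiplicity), zero_add] at h
    simpa [h] using S.two_le_multiplicity
  H := formula3 S

/-- We have that `S.Solution'_descent.multiplicity = S.multiplicity - 1`. -/
lemma Solution'_descent_multiplicity : S.Solution'_descent.multiplicity = S.multiplicity - 1 := by
  refine multiplicity_eq_of_dvd_of_not_dvd
    (by simp [Solution'_descent]) (fun h ↦ S.lambda_not_dvd_X ?_)
  obtain ⟨k, hk : λ ^ (S.multiplicity - 1) * S.X = λ ^ (S.multiplicity - 1 + 1) * k⟩ := h
  rw [pow_succ, mul_assoc] at hk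
  simp only [mul_eq_mul_left_iff, pow_eq_zero_iff', hζ.zeta_sub_one_prime'.ne_zero, ne_eq,
    false_and, or_false] at hk
  simp [hk]

/-- We have that `S.Solution'_descent.multiplicity < S.multiplicity`. -/
lemma Solution'_descent_multiplicity_lt :
    (Solution'_descent S).multiplicity < S.multiplicity := by
  rw [Solution'_descent_multiplicity S, Nat.sub_one]
  exact Nat.pred_lt <| by have := S.two_le_multiplicity; lia

/-- Given any `S : Solution`, there is another `S₁ : Solution` such that
  `S₁.multiplicity < S.multiplicity` -/
theorem exists_Solution_multiplicity_lt :
    ∃ S₁ : Solution hζ, S₁.multiplicity < S.multiplicity := by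
  obtain ⟨S', hS'⟩ := exists_Solution_of_Solution' (Solution'_descent S)
  exact ⟨S', hS' ▸ Solution'_descent_multiplicity_lt S⟩

end Solution

end CubicDescent

end eisenstein

section arith

open NumberField IsCyclotomicExtension.Rat.Three

variable {K : Type*} [Field K] [NumberField K] {ζ : K} (hζ : IsPrimitiveRoot ζ 3)

theorem cubicDescent_holds [IsCyclotomicExtension {3} ℚ K] : CubicDescent hζ := by
  intro a b c u hc ha hb hcdvd coprime H
  let S' : CubicDescent.Solution' hζ :=
  { a := a
    b := b
    c := c
    u := u
    ha := ha
    hb := hb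
    hc := hc
    coprime := coprime
    hcdvd := hcdvd
    H := H }
  obtain ⟨S, -⟩ := CubicDescent.exists_Solution_of_Solution' S'
  obtain ⟨Smin, hSmin⟩ := S.exists_minimal
  obtain ⟨Sfin, hSfin⟩ := Smin.exists_Solution_multiplicity_lt
  linarith [hSmin Sfin]

/-- no odd integer combination: `λ ^ 2` divides an integer `n` only if `3` divides `n`, etc. -/
theorem lambda_not_dvd_one [IsCyclotomicExtension {3} ℚ K] : ¬ (hζ.toInteger - 1) ∣ 1 :=
  fun h => hζ.zeta_sub_one_prime'.not_isUnit (isUnit_of_dvd_one h)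

theorem lambda_cube_not_dvd_three [IsCyclotomicExtension {3} ℚ K] :
    ¬ (hζ.toInteger - 1) ^ 3 ∣ 3 := by
  rintro ⟨x, hx⟩
  have h1 := eta_sq_add_eta_add_one hζ
  simp only [IsUnit.unit_spec] at h1
  have h0 := hζ.zeta_sub_one_prime'.ne_zero
  apply lambda_not_dvd_one hζ
  have h3 := hζ.toInteger_cube_eq_one
  have h4 : (hζ.toInteger - 1) ^ 2 = - 3 * hζ.toInteger := by linear_combination h1
  have h5 : (3 : 𝓞 K) * 1 = 3 * ((hζ.toInteger - 1) * (-hζ.toInteger * x)) := by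
    rw [mul_one]
    linear_combination hx + (hζ.toInteger - 1) * x * h4
  have h6 := mul_left_cancel₀ (by norm_num) h5
  exact ⟨_, h6⟩

theorem cube_congr_sign [IsCyclotomicExtension {3} ℚ K] {a : 𝓞 K}
    (ha : ¬ (hζ.toInteger - 1) ∣ a) :
    ∃ e : ℤ, (e = 1 ∨ e = -1) ∧ (hζ.toInteger - 1) ^ 4 ∣ a ^ 3 - (e : 𝓞 K) := by
  rcases lambda_pow_four_dvd_cube_sub_one_or_add_one_of_lambda_not_dvd hζ ha with h | h
  · exact ⟨1, Or.inl rfl, by simpa using h⟩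
  · exact ⟨-1, Or.inr rfl, by simpa using h⟩

theorem cubic_case_one [IsCyclotomicExtension {3} ℚ K] {a b c : 𝓞 K} {w : (𝓞 K)ˣ}
    (ha : ¬ (hζ.toInteger - 1) ∣ a) (hb : ¬ (hζ.toInteger - 1) ∣ b)
    (hc : ¬ (hζ.toInteger - 1) ∣ c) : a ^ 3 + b ^ 3 ≠ w * c ^ 3 := by
  intro H
  obtain ⟨ea, hea, da⟩ := cube_congr_sign hζ ha
  obtain ⟨eb, heb, db⟩ := cube_congr_sign hζ hb
  obtain ⟨ec, hec, dc⟩ := cube_congr_sign hζ hc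
  have h4 : (hζ.toInteger - 1) ^ 4 ∣ (w : 𝓞 K) * ec - ea - eb := by
    have := dvd_sub (dvd_add da db) (dvd_mul_of_dvd_right dc (w : 𝓞 K))
    convert! this using 1
    linear_combination -H
  have hec2 : (ec : 𝓞 K) ^ 2 = 1 := by rcases hec with h | h <;> simp [h]
  have hw : w = 1 ∨ w = -1 := by
    apply eq_one_or_neg_one_of_unit_of_congruent hζ
    refine ⟨(ea + eb) * ec, (pow_dvd_pow _ (by norm_num : 2 ≤ 4)).trans ?_⟩
    have := dvd_mul_of_dvd_right h4 (ec : 𝓞 K)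
    convert! this using 1
    push_cast
    linear_combination -(w : 𝓞 K) * hec2
  have h3 : (hζ.toInteger - 1) ^ 3 ∣ (w : 𝓞 K) * ec - ea - eb :=
    (pow_dvd_pow _ (by norm_num : 3 ≤ 4)).trans h4
  have hn3 := lambda_cube_not_dvd_three hζ
  have hn1 : ¬ (hζ.toInteger - 1) ^ 3 ∣ 1 :=
    fun h => lambda_not_dvd_one hζ ((dvd_pow_self _ (by norm_num)).trans h)
  have key : ∃ e : 𝓞 K, (e = 1 ∨ e = -1) ∧
      ((w : 𝓞 K) * ec - ea - eb = e ∨ (w : 𝓞 K) * ec - ea - eb = 3 * e) := by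
    rcases hw with rfl | rfl <;> rcases hea with rfl | rfl <;> rcases heb with rfl | rfl <;>
      rcases hec with rfl | rfl <;>
      first
      | (refine ⟨1, Or.inl rfl, Or.inl ?_⟩; push_cast; ring1)
      | (refine ⟨-1, Or.inr rfl, Or.inl ?_⟩; push_cast; ring1)
      | (refine ⟨1, Or.inl rfl, Or.inr ?_⟩; push_cast; ring1)
      | (refine ⟨-1, Or.inr rfl, Or.inr ?_⟩; push_cast; ring1)
  obtain ⟨e, he | he, h | h⟩ := key <;> rw [h, he] at h3
  · exact hn1 h3
  · exact hn3 (by simpa using h3)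
  · exact hn1 (by simpa using h3)
  · exact hn3 (by simpa using h3)

theorem cubic_coprime (hζ : IsPrimitiveRoot ζ 3) [IsCyclotomicExtension {3} ℚ K] {a b c : 𝓞 K} {w : (𝓞 K)ˣ}
    (hab : IsCoprime a b) (ha : a ≠ 0) (hb : b ≠ 0) (hc : c ≠ 0) :
    a ^ 3 + b ^ 3 ≠ w * c ^ 3 := by
  have hp := hζ.zeta_sub_one_prime'
  have aux : ∀ {a b : 𝓞 K}, IsCoprime a b → a ≠ 0 → b ≠ 0 →
      (hζ.toInteger - 1) ∣ a → a ^ 3 + b ^ 3 ≠ w * c ^ 3 := by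
    intro a b hab ha hb hda H
    have hdb : ¬ (hζ.toInteger - 1) ∣ b := fun h => hp.not_isUnit (hab.isUnit_of_dvd' hda h)
    have hdc : ¬ (hζ.toInteger - 1) ∣ c := by
      intro h
      apply hdb
      apply hp.dvd_of_dvd_pow (n := 3)
      rw [show b ^ 3 = w * c ^ 3 - a ^ 3 by linear_combination H]
      exact dvd_sub (dvd_mul_of_dvd_right (dvd_pow h (by norm_num)) _) (dvd_pow hda (by norm_num))
    obtain ⟨eb, heb, db⟩ := cube_congr_sign hζ hdb
    obtain ⟨ec, hec, dc⟩ := cube_congr_sign hζ hdc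
    have hec2 : (ec : 𝓞 K) ^ 2 = 1 := by rcases hec with h | h <;> simp [h]
    have hw : w = 1 ∨ w = -1 := by
      apply eq_one_or_neg_one_of_unit_of_congruent hζ
      refine ⟨eb * ec, ?_⟩
      have h2 := (pow_dvd_pow (hζ.toInteger - 1) (by norm_num : 2 ≤ 4))
      have h3 : (hζ.toInteger - 1) ^ 2 ∣ a ^ 3 :=
        (pow_dvd_pow (hζ.toInteger - 1) (by norm_num : 2 ≤ 3)).trans (pow_dvd_pow_of_dvd hda 3)
      have := dvd_mul_of_dvd_right (dvd_sub (dvd_add h3 (h2.trans db))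
        (dvd_mul_of_dvd_right (h2.trans dc) (w : 𝓞 K))) (ec : 𝓞 K)
      convert! this using 1
      push_cast
      linear_combination -(w : 𝓞 K) * hec2 - ec * H
    have hw2 : (w : 𝓞 K) ^ 2 = 1 := by rcases hw with h | h <;> simp [h]
    have hcop : IsCoprime ((w : 𝓞 K) * c) (-b) := by
      have h1 : IsCoprime (a ^ 3 + b * b ^ 2) b := (hab.pow_left (m := 3)).add_mul_left_left _
      rw [show a ^ 3 + b * b ^ 2 = (w * c) ^ 3 by
        linear_combination H - w * c ^ 3 * hw2] at h1
      exact ((IsCoprime.pow_left_iff (by norm_num)).1 h1).neg_right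
    refine cubicDescent_holds hζ (w * c) (-b) a 1 ha ?_ ?_ hda hcop ?_
    · intro h; exact hdc (Units.dvd_mul_left.1 h)
    · simpa using hdb
    · push_cast
      linear_combination -H + w * c ^ 3 * hw2
  by_cases hda : (hζ.toInteger - 1) ∣ a
  · exact aux hab ha hb hda
  by_cases hdb : (hζ.toInteger - 1) ∣ b
  · rw [add_comm]; exact aux hab.symm hb ha hdb
  by_cases hdc : (hζ.toInteger - 1) ∣ c
  · exact cubicDescent_holds hζ a b c w hc hda hdb hdc hab
  · exact cubic_case_one hζ hda hdb hdc

theorem cubic_integral (hζ : IsPrimitiveRoot ζ 3) [IsCyclotomicExtension {3} ℚ K] {a b c : 𝓞 K} {w : (𝓞 K)ˣ}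
    (ha : a ≠ 0) (hb : b ≠ 0) (hc : c ≠ 0) :
    a ^ 3 + b ^ 3 ≠ w * c ^ 3 := by
  classical
  intro H
  have : IsPrincipalIdealRing (𝓞 K) := IsCyclotomicExtension.Rat.three_pid K
  let _ : GCDMonoid (𝓞 K) := IsBezout.toGCDDomain _
  obtain ⟨a', b', h1, h2, h3⟩ := extract_gcd a b
  have hcop : IsCoprime a' b' := (gcd_isUnit_iff a' b').1 h3
  set d := gcd a b
  have hd : d ≠ 0 := by rintro h; rw [h, zero_mul] at h1; exact ha h1
  have hdc : d ∣ c := by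
    rw [← IsIntegrallyClosed.pow_dvd_pow_iff (n := 3) (by norm_num), ← Units.dvd_mul_left (u := w), ← H]
    exact ⟨a' ^ 3 + b' ^ 3, by rw [h1, h2]; ring⟩
  obtain ⟨c', rfl⟩ := hdc
  refine cubic_coprime hζ (c := c') (w := w) hcop ?_ ?_ ?_ ?_
  · rintro rfl; simp at h1; exact ha h1
  · rintro rfl; simp at h2; exact hb h2
  · rintro rfl; simp at hc
  · apply mul_left_cancel₀ (pow_ne_zero 3 hd)
    rw [h1, h2] at H
    linear_combination H

theorem cubic_field (hζ : IsPrimitiveRoot ζ 3) [IsCyclotomicExtension {3} ℚ K] {a b c : K} (w : (𝓞 K)ˣ)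
    (ha : a ≠ 0) (hb : b ≠ 0) (hc : c ≠ 0) :
    a ^ 3 + b ^ 3 ≠ algebraMap (𝓞 K) K w * c ^ 3 := by
  classical
  intro H
  obtain ⟨d, hd⟩ := IsLocalization.exist_integer_multiples_of_finset (nonZeroDivisors (𝓞 K))
    ({a, b, c} : Finset K)
  obtain ⟨a', ha'⟩ := hd a (by simp)
  obtain ⟨b', hb'⟩ := hd b (by simp)
  obtain ⟨c', hc'⟩ := hd c (by simp)
  have hd0 : algebraMap (𝓞 K) K d ≠ 0 := by simp
  rw [Algebra.smul_def] at ha' hb' hc'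
  have inj := FaithfulSMul.algebraMap_injective (𝓞 K) K
  refine cubic_integral hζ (a := a') (b := b') (c := c') (w := w) ?_ ?_ ?_ ?_
  · rintro rfl; rw [map_zero] at ha'; exact mul_ne_zero hd0 ha ha'.symm
  · rintro rfl; rw [map_zero] at hb'; exact mul_ne_zero hd0 hb hb'.symm
  · rintro rfl; rw [map_zero] at hc'; exact mul_ne_zero hd0 hc hc'.symm
  · apply inj
    simp only [map_add, map_mul, map_pow, ha', hb', hc']
    linear_combination (algebraMap (𝓞 K) K d) ^ 3 * H

end arith

section count

open NumberField IsCyclotomicExtension.Rat.Three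

theorem exists_cyclotomic_three (K : Type*) [Field K] [NumberField K]
    (s : K) (hs : s ^ 2 = -3) (hK : Module.finrank ℚ K = 2) :
    ∃ ζ : K, IsPrimitiveRoot ζ 3 ∧ IsCyclotomicExtension {3} ℚ K := by
  have hq : ((-1 + s) / 2) ^ 2 + ((-1 + s) / 2) + 1 = 0 := by linear_combination hs / 4
  have hζ : IsPrimitiveRoot ((-1 + s) / 2) 3 := by
    rw [← Polynomial.isRoot_cyclotomic_iff]
    simpa [Polynomial.cyclotomic_three] using hq
  refine ⟨_, hζ, ?_⟩
  have h1 := hζ.intermediateField_adjoin_isCyclotomicExtension ℚ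
  have htop : IntermediateField.adjoin ℚ {(-1 + s) / 2} = ⊤ := by
    apply IntermediateField.eq_of_le_of_finrank_eq le_top
    rw [IntermediateField.finrank_top', hK,
      IntermediateField.adjoin.finrank (hζ.isIntegral (by norm_num)).tower_top,
      ← Polynomial.cyclotomic_eq_minpoly_rat hζ (by norm_num), Polynomial.natDegree_cyclotomic]
    rfl
  rw [htop] at h1
  exact IsCyclotomicExtension.equiv {3} ℚ _ IntermediateField.topEquiv

variable {K : Type*} [Field K] [NumberField K] {ζ : K}

theorem unit_form (hζ : IsPrimitiveRoot ζ 3) [IsCyclotomicExtension {3} ℚ K] (u : (𝓞 K)ˣ) :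
    ∃ e : K, (e = 1 ∨ e = -1) ∧ (algebraMap (𝓞 K) K u = e ∨ algebraMap (𝓞 K) K u = e * ζ ∨
      algebraMap (𝓞 K) K u = e * ζ ^ 2) := by
  have hz : algebraMap (𝓞 K) K hζ.toInteger = ζ := rfl
  have := Units.mem hζ u
  simp only [List.mem_cons, List.not_mem_nil, or_false] at this
  rcases this with h | h | h | h | h | h
  · exact ⟨1, Or.inl rfl, Or.inl (by simp [h, hz])⟩
  · exact ⟨-1, Or.inr rfl, Or.inl (by simp [h, hz])⟩
  · exact ⟨1, Or.inl rfl, Or.inr (Or.inl (by simp [h, hz]))⟩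
  · exact ⟨-1, Or.inr rfl, Or.inr (Or.inl (by simp [h, hz]))⟩
  · exact ⟨1, Or.inl rfl, Or.inr (Or.inr (by simp [h, hz]))⟩
  · exact ⟨-1, Or.inr rfl, Or.inr (Or.inr (by simp [h, hz]))⟩

theorem zeta_rel (hζ : IsPrimitiveRoot ζ 3) : ζ ^ 2 + ζ + 1 = 0 := by
  simpa [Polynomial.cyclotomic_three] using hζ.isRoot_cyclotomic (by decide)

/-- A sign times a primitive cube root of unity is not a cube. -/
theorem not_cube (hζ : IsPrimitiveRoot ζ 3) [IsCyclotomicExtension {3} ℚ K] {e t : K}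
    (he : e = 1 ∨ e = -1) : t ^ 3 ≠ e * ζ := by
  intro h
  have h3 := hζ.pow_eq_one
  have hrel := zeta_rel hζ
  have he2 : e ^ 2 = 1 := by rcases he with h | h <;> simp [h]
  have h18 : t ^ 18 = 1 := by
    calc t ^ 18 = (t ^ 3) ^ 6 := by ring
    _ = (e ^ 2) ^ 3 * (ζ ^ 3) ^ 2 := by rw [h]; ring
    _ = 1 := by rw [he2, h3]; ring
  have hint : IsIntegral ℤ t := IsIntegral.of_pow (n := 18) (by norm_num) (by rw [h18]; exact isIntegral_one)
  obtain ⟨y, hy⟩ : ∃ y : 𝓞 K, algebraMap (𝓞 K) K y = t := ⟨⟨t, hint⟩, rfl⟩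
  have hyu : IsUnit y := by
    apply IsUnit.of_pow_eq_one (n := 18) _ (by norm_num)
    apply FaithfulSMul.algebraMap_injective (𝓞 K) K
    rw [map_pow, hy, h18, map_one]
  obtain ⟨w, rfl⟩ := hyu
  obtain ⟨f, hf, hw⟩ := unit_form hζ w
  rw [hy] at hw
  have hf3 : f ^ 3 = 1 ∨ f ^ 3 = -1 := by rcases hf with h | h <;> rw [h] <;> norm_num
  have ht3 : t ^ 3 = f ^ 3 := by
    rcases hw with hw | hw | hw <;> rw [hw]
    · rw [mul_pow, h3, mul_one]
    · rw [mul_pow, ← pow_mul, mul_comm 2 3, pow_mul, h3]; simp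
  have hζe : ζ = 1 ∨ ζ = -1 := by
    rw [ht3] at h
    have : ζ = e * f ^ 3 := by linear_combination (-ζ) * he2 - e * h
    rcases he with rfl | rfl <;> rcases hf3 with h | h <;> rw [h] at this <;> simp [this]
  rcases hζe with h | h
  · rw [h] at hrel; norm_num at hrel
  · rw [h] at hrel; norm_num at hrel

theorem ncard_cube_roots (hζ : IsPrimitiveRoot ζ 3) {w a : K} (hw : w ≠ 0) (ha : a ^ 3 = w) :
    {c : K | c ^ 3 = w}.ncard = 3 := by
  have h3 := hζ.pow_eq_one
  have hrel := zeta_rel hζ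
  have ha0 : a ≠ 0 := by rintro rfl; apply hw; rw [← ha]; simp
  have h1 : ζ ≠ 1 := hζ.ne_one (by norm_num)
  have h0 : ζ ≠ 0 := hζ.ne_zero (by norm_num)
  rw [Set.ncard_eq_three]
  refine ⟨a, ζ * a, ζ ^ 2 * a, ?_, ?_, ?_, ?_⟩
  · intro h
    exact h1 (mul_right_cancel₀ ha0 (by rw [← h, one_mul]))
  · intro h
    have : ζ ^ 2 = 1 := mul_right_cancel₀ ha0 (by rw [← h, one_mul])
    apply h1
    linear_combination h3 - ζ * this
  · intro h
    have : ζ ^ 2 = ζ := (mul_right_cancel₀ ha0 h).symm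
    apply h1
    exact mul_left_cancel₀ h0 (by linear_combination this)
  · ext c
    simp only [Set.mem_ofPred_eq, Set.mem_insert_iff, Set.mem_singleton_iff]
    constructor
    · intro h
      have : (c - a) * ((c - ζ * a) * (c - ζ ^ 2 * a)) = 0 := by
        linear_combination h - ha + (c * a ^ 2 * ζ - c ^ 2 * a) * hrel + (- a ^ 3) * h3
      simpa [sub_eq_zero] using this
    · rintro (rfl | rfl | rfl)
      · exact ha
      · rw [mul_pow, h3, ha, one_mul]
      · rw [mul_pow, ← pow_mul, mul_comm 2 3, pow_mul, h3, ha]; simp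

theorem finite_cube_roots (w : K) : {c : K | c ^ 3 = w}.Finite := by
  classical
  have : {c : K | c ^ 3 = w} = ((Polynomial.nthRoots 3 w).toFinset : Set K) := by
    ext c; simp [Polynomial.mem_nthRoots]
  rw [this]; exact Finset.finite_toSet _

theorem ncard_cube_roots_zero {w : K} (hw : ∀ a, a ^ 3 ≠ w) :
    {c : K | c ^ 3 = w}.ncard = 0 := by
  rw [show {c : K | c ^ 3 = w} = ∅ from Set.eq_empty_of_forall_notMem hw]; simp

theorem affine_trivial {U V : K} (hU : U ≠ 0) (hV : V ≠ 0)
    (h : ∀ b c : K, b ≠ 0 → c ≠ 0 → 1 + U * b ^ 3 + V * c ^ 3 ≠ 0) :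
    {p : K × K | 1 + U * p.1 ^ 3 + V * p.2 ^ 3 = 0}.Finite ∧
    {p : K × K | 1 + U * p.1 ^ 3 + V * p.2 ^ 3 = 0}.ncard =
      {c : K | c ^ 3 = -V⁻¹}.ncard + {c : K | c ^ 3 = -U⁻¹}.ncard := by
  have key : {p : K × K | 1 + U * p.1 ^ 3 + V * p.2 ^ 3 = 0} =
      (({0} : Set K) ×ˢ {c : K | c ^ 3 = -V⁻¹}) ∪ ({c : K | c ^ 3 = -U⁻¹} ×ˢ ({0} : Set K)) := by
    ext ⟨b, c⟩
    simp only [Set.mem_ofPred_eq, Set.mem_union, Set.mem_prod, Set.mem_singleton_iff]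
    constructor
    · intro H
      by_cases hb : b = 0
      · left
        refine ⟨hb, ?_⟩
        subst hb
        field_simp
        linear_combination H
      · by_cases hc : c = 0
        · right
          refine ⟨?_, hc⟩
          subst hc
          field_simp
          linear_combination H
        · exact absurd H (h b c hb hc)
    · rintro (⟨rfl, H⟩ | ⟨H, rfl⟩)
      · rw [H]; field_simp; ring
      · rw [H]; field_simp; ring
  have f1 := (Set.finite_singleton (0 : K)).prod (finite_cube_roots (-V⁻¹))
  have f2 := (finite_cube_roots (-U⁻¹)).prod (Set.finite_singleton (0 : K))
  rw [key]
  refine ⟨f1.union f2, ?_⟩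
  rw [Set.ncard_union_eq _ f1 f2, Set.ncard_prod, Set.ncard_prod]
  · simp
  · rw [Set.disjoint_left]
    rintro ⟨b, c⟩ ⟨rfl, h1⟩ ⟨h2, h3⟩
    simp at h2
    exact hU h2

theorem affine_total {U V : K} (hU : U ≠ 0) (hV : V ≠ 0)
    (h : ∀ b c : K, b ≠ 0 → c ≠ 0 → 1 + U * b ^ 3 + V * c ^ 3 ≠ 0)
    (hn : {c : K | c ^ 3 = -V⁻¹}.ncard + {c : K | c ^ 3 = -U⁻¹}.ncard +
      {c : K | c ^ 3 = -U / V}.ncard = 3 ∨ {c : K | c ^ 3 = -V⁻¹}.ncard +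
      {c : K | c ^ 3 = -U⁻¹}.ncard + {c : K | c ^ 3 = -U / V}.ncard = 9) :
    {p : K × K | 1 + U * p.1 ^ 3 + V * p.2 ^ 3 = 0}.Finite ∧
    ({p : K × K | 1 + U * p.1 ^ 3 + V * p.2 ^ 3 = 0}.ncard + {c : K | c ^ 3 = -U / V}.ncard = 3 ∨
    {p : K × K | 1 + U * p.1 ^ 3 + V * p.2 ^ 3 = 0}.ncard + {c : K | c ^ 3 = -U / V}.ncard = 9) := by
  obtain ⟨h1, h2⟩ := affine_trivial hU hV h
  exact ⟨h1, by rwa [h2]⟩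

theorem affine_exotic (hζ : IsPrimitiveRoot ζ 3) [IsCyclotomicExtension {3} ℚ K] {e f : K}
    (he : e = 1 ∨ e = -1) (hf : f = 1 ∨ f = -1) :
    {p : K × K | 1 + (e * ζ) * p.1 ^ 3 + (f * ζ ^ 2) * p.2 ^ 3 = 0}.Finite ∧
    {p : K × K | 1 + (e * ζ) * p.1 ^ 3 + (f * ζ ^ 2) * p.2 ^ 3 = 0}.ncard = 9 := by
  have h3 := hζ.pow_eq_one
  have hrel := zeta_rel hζ
  have h1 : ζ ≠ 1 := hζ.ne_one (by norm_num)
  have h0 : ζ ≠ 0 := hζ.ne_zero (by norm_num)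
  have he2 : e ^ 2 = 1 := by rcases he with h | h <;> simp [h]
  have hf2 : f ^ 2 = 1 := by rcases hf with h | h <;> simp [h]
  have key : {p : K × K | 1 + (e * ζ) * p.1 ^ 3 + (f * ζ ^ 2) * p.2 ^ 3 = 0} =
      {c : K | c ^ 3 = e} ×ˢ {c : K | c ^ 3 = f} := by
    ext ⟨b, c⟩
    simp only [Set.mem_ofPred_eq, Set.mem_prod]
    constructor
    · intro H
      have hb : b ≠ 0 := by
        rintro rfl
        apply not_cube hζ (t := c) (e := -f) (by rcases hf with h | h <;> simp [h])
        linear_combination f * ζ * H - c ^ 3 * ζ ^ 3 * hf2 - c ^ 3 * h3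
      have hc : c ≠ 0 := by
        rintro rfl
        apply not_cube hζ (t := ζ * b ^ 2) (e := 1) (Or.inl rfl)
        linear_combination ζ * (-1 + e * ζ * b ^ 3) * H + (- ζ ^ 3 * b ^ 6) * he2
      by_cases ha : 1 + ζ * (e * ζ * b ^ 3) + ζ ^ 2 * (f * ζ ^ 2 * c ^ 3) = 0
      · have hC : f * ζ ^ 2 * c ^ 3 = ζ ^ 2 := by
          have hh : (ζ - 1) * (ζ * (f * ζ ^ 2 * c ^ 3)) = (ζ - 1) * 1 := by
            linear_combination ha - ζ * H
          have := mul_left_cancel₀ (sub_ne_zero.2 h1) hh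
          linear_combination ζ ^ 2 * this - (f * ζ ^ 2 * c ^ 3) * h3
        have hB : e * ζ * b ^ 3 = ζ := by linear_combination H - hC - hrel
        have hC' : f * c ^ 3 = 1 := mul_left_cancel₀ (pow_ne_zero 2 h0) (by linear_combination hC)
        have hB' : e * b ^ 3 = 1 := mul_left_cancel₀ h0 (by linear_combination hB)
        constructor
        · linear_combination e * hB' - b ^ 3 * he2
        · linear_combination f * hC' - c ^ 3 * hf2
      by_cases hb' : 1 + ζ ^ 2 * (e * ζ * b ^ 3) + ζ * (f * ζ ^ 2 * c ^ 3) = 0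
      · exfalso
        have hB : e * ζ * b ^ 3 = ζ ^ 2 := by
          have hh : (ζ - 1) * (ζ * (e * ζ * b ^ 3)) = (ζ - 1) * 1 := by
            linear_combination hb' - ζ * H
          have := mul_left_cancel₀ (sub_ne_zero.2 h1) hh
          linear_combination ζ ^ 2 * this - (e * ζ * b ^ 3) * h3
        have hB' : e * b ^ 3 = ζ := mul_left_cancel₀ h0 (by linear_combination hB)
        apply not_cube hζ (t := b) he
        linear_combination e * hB' - b ^ 3 * he2
      · exfalso
        have hbc : 3 * e * f * b * c ≠ 0 := by
          have : e ≠ 0 := by rintro rfl; simp at he2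
          have : f ≠ 0 := by rintro rfl; simp at hf2
          simp_all
        apply cubic_field hζ 1 ha hb' hbc
        have e3 : e ^ 3 = e := by linear_combination e * he2
        have f3 : f ^ 3 = f := by linear_combination f * hf2
        have gen : ∀ B C : K, 1 + B + C = 0 →
            (1 + ζ * B + ζ ^ 2 * C) ^ 3 + (1 + ζ ^ 2 * B + ζ * C) ^ 3 = 27 * (B * C) := by
          intro B C hBC
          have hz : ζ ^ 2 = -1 - ζ := by linear_combination hrel
          have hC : C = -1 - B := by linear_combination hBC
          subst hC
          rw [hz]
          have e1 : (1 + ζ * B + (-1 - ζ) * (-1 - B)) = (2 + B) + ζ * (1 + 2 * B) := by ring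
          have e2 : (1 + (-1 - ζ) * B + ζ * (-1 - B)) = (1 - B) - ζ * (1 + 2 * B) := by ring
          rw [e1, e2]
          linear_combination (9*(2*B+1)^2) * hrel
        rw [gen _ _ H]
        simp only [Units.val_one, map_one, one_mul]
        linear_combination 27 * e * f * b ^ 3 * c ^ 3 * h3 - 27 * b ^ 3 * c ^ 3 * (f ^ 3 * e3 + e * f3)
    · rintro ⟨hb, hc⟩
      rw [hb, hc]
      linear_combination hrel + ζ * he2 + ζ ^ 2 * hf2
  have f1 := finite_cube_roots e
  have f2 := finite_cube_roots f
  rw [key]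
  refine ⟨f1.prod f2, ?_⟩
  rw [Set.ncard_prod, ncard_cube_roots hζ (a := e), ncard_cube_roots hζ (a := f)]
  · rintro rfl; simp at hf2
  · linear_combination f * hf2
  · rintro rfl; simp at he2
  · linear_combination e * he2

end count

section final

open NumberField IsCyclotomicExtension.Rat.Three

variable {K : Type*} [Field K] [NumberField K] {ζ : K}

theorem affine_count (hζ : IsPrimitiveRoot ζ 3) [IsCyclotomicExtension {3} ℚ K] (u v : (𝓞 K)ˣ)
    {U V : K} (hu : algebraMap (𝓞 K) K u = U) (hv : algebraMap (𝓞 K) K v = V) :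
    {p : K × K | 1 + U * p.1 ^ 3 + V * p.2 ^ 3 = 0}.Finite ∧
    ({p : K × K | 1 + U * p.1 ^ 3 + V * p.2 ^ 3 = 0}.ncard + {c : K | c ^ 3 = -U / V}.ncard = 3 ∨
    {p : K × K | 1 + U * p.1 ^ 3 + V * p.2 ^ 3 = 0}.ncard + {c : K | c ^ 3 = -U / V}.ncard = 9) := by
  have hU : U ≠ 0 := by rw [← hu]; simp
  have hV : V ≠ 0 := by rw [← hv]; simp
  have h3 := hζ.pow_eq_one
  have h0 : ζ ≠ 0 := hζ.ne_zero (by norm_num)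
  have hζ' : IsPrimitiveRoot (ζ ^ 2) 3 := hζ.pow_of_coprime 2 (by decide)
  obtain ⟨e, he, hue⟩ := unit_form hζ u
  obtain ⟨f, hf, hvf⟩ := unit_form hζ v
  rw [hu] at hue
  rw [hv] at hvf
  have he2 : e ^ 2 = 1 := by rcases he with h | h <;> simp [h]
  have hf2 : f ^ 2 = 1 := by rcases hf with h | h <;> simp [h]
  have he0 : e ≠ 0 := by rintro rfl; simp at he2
  have hf0 : f ≠ 0 := by rintro rfl; simp at hf2
  have hef : -(e * f) = 1 ∨ -(e * f) = -1 := by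
    rcases he with rfl | rfl <;> rcases hf with rfl | rfl <;> simp
  have hme : -e = 1 ∨ -e = -1 := by rcases he with rfl | rfl <;> simp
  have hmf : -f = 1 ∨ -f = -1 := by rcases hf with rfl | rfl <;> simp
  have e3 : e ^ 3 = e := by linear_combination e * he2
  have f3 : f ^ 3 = f := by linear_combination f * hf2
  have ei : e⁻¹ = e := by field_simp; linear_combination -he2
  have fi : f⁻¹ = f := by field_simp; linear_combination -hf2
  have zi : ζ⁻¹ = ζ ^ 2 := by field_simp; linear_combination -h3
  have zi2 : (ζ ^ 2)⁻¹ = ζ := by field_simp; linear_combination -h3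
  -- cube counts
  have c3 : ∀ w : K, (w = 1 ∨ w = -1) → {c : K | c ^ 3 = w}.ncard = 3 := by
    rintro w (rfl | rfl)
    · exact ncard_cube_roots hζ (a := 1) (by norm_num) (by norm_num)
    · exact ncard_cube_roots hζ (a := -1) (by norm_num) (by norm_num)
  have c0 : ∀ w : K, (w = 1 ∨ w = -1) → {c : K | c ^ 3 = w * ζ}.ncard = 0 :=
    fun w hw => ncard_cube_roots_zero fun a => not_cube hζ hw
  have c0' : ∀ w : K, (w = 1 ∨ w = -1) → {c : K | c ^ 3 = w * ζ ^ 2}.ncard = 0 :=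
    fun w hw => ncard_cube_roots_zero fun a => not_cube hζ' hw
  -- the nontrivial-solution exclusions
  have exU : U = e → ∀ b c : K, b ≠ 0 → c ≠ 0 → 1 + U * b ^ 3 + V * c ^ 3 ≠ 0 := by
    rintro rfl b c hb hc H
    apply cubic_field hζ (a := 1) (b := U * b) (c := c) (-v) one_ne_zero (mul_ne_zero he0 hb) hc
    rw [Units.val_neg, map_neg, hv]
    linear_combination H + b ^ 3 * e3
  have exV : V = f → ∀ b c : K, b ≠ 0 → c ≠ 0 → 1 + U * b ^ 3 + V * c ^ 3 ≠ 0 := by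
    rintro rfl b c hb hc H
    apply cubic_field hζ (a := 1) (b := V * c) (c := b) (-u) one_ne_zero (mul_ne_zero hf0 hc) hb
    rw [Units.val_neg, map_neg, hu]
    linear_combination H + c ^ 3 * f3
  have exUV : V = e * f * U → ∀ b c : K, b ≠ 0 → c ≠ 0 → 1 + U * b ^ 3 + V * c ^ 3 ≠ 0 := by
    intro hUV b c hb hc H
    apply cubic_field hζ (a := b) (b := e * f * c) (c := 1) (-u⁻¹) hb
      (mul_ne_zero (mul_ne_zero he0 hf0) hc) one_ne_zero
    have hi : algebraMap (𝓞 K) K ((u⁻¹ : (𝓞 K)ˣ) : 𝓞 K) = U⁻¹ := by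
      apply eq_inv_of_mul_eq_one_left
      rw [← hu, ← map_mul, Units.inv_mul, map_one]
    rw [Units.val_neg, map_neg, hi, mul_pow, mul_pow, e3, f3]
    field_simp
    rw [hUV] at H
    linear_combination H
  have q00 : -e / f = -(e * f) := by rw [div_eq_mul_inv, fi]; ring
  have vz : -(f * ζ)⁻¹ = -f * ζ ^ 2 := by rw [mul_inv, fi, zi]; ring
  have vz2 : -(f * ζ ^ 2)⁻¹ = -f * ζ := by rw [mul_inv, fi, zi2]; ring
  have uz : -(e * ζ)⁻¹ = -e * ζ ^ 2 := by rw [mul_inv, ei, zi]; ring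
  have uz2 : -(e * ζ ^ 2)⁻¹ = -e * ζ := by rw [mul_inv, ei, zi2]; ring
  have q01 : -e / (f * ζ) = -(e * f) * ζ ^ 2 := by
    rw [div_eq_mul_inv, mul_inv, fi, zi]; ring
  have q02 : -e / (f * ζ ^ 2) = -(e * f) * ζ := by
    rw [div_eq_mul_inv, mul_inv, fi, zi2]; ring
  have q10 : -(e * ζ) / f = -(e * f) * ζ := by rw [div_eq_mul_inv, fi]; ring
  have q20 : -(e * ζ ^ 2) / f = -(e * f) * ζ ^ 2 := by rw [div_eq_mul_inv, fi]; ring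
  have q11 : -(e * ζ) / (f * ζ) = -(e * f) := by
    rw [div_eq_mul_inv, mul_inv, fi, zi]; linear_combination -(e * f) * h3
  have q22 : -(e * ζ ^ 2) / (f * ζ ^ 2) = -(e * f) := by
    rw [div_eq_mul_inv, mul_inv, fi, zi2]; linear_combination -(e * f) * h3
  have q12 : -(e * ζ) / (f * ζ ^ 2) = -(e * f) * ζ ^ 2 := by
    rw [div_eq_mul_inv, mul_inv, fi, zi2]; ring
  have q21 : -(e * ζ ^ 2) / (f * ζ) = -(e * f) * ζ := by
    rw [div_eq_mul_inv, mul_inv, fi, zi]; linear_combination -(e * f) * ζ * h3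
  rcases hue with h | h | h <;> rcases hvf with h' | h' | h'
  · refine affine_total hU hV (exU h) (Or.inr ?_)
    rw [h, h', fi, ei, q00, c3 _ hme, c3 _ hmf, c3 _ hef]
  · refine affine_total hU hV (exU h) (Or.inl ?_)
    rw [h, h', vz, ei, q01, c3 _ hme, c0' _ hmf, c0' _ hef]
  · refine affine_total hU hV (exU h) (Or.inl ?_)
    rw [h, h', vz2, ei, q02, c3 _ hme, c0 _ hmf, c0 _ hef]
  · refine affine_total hU hV (exV h') (Or.inl ?_)
    rw [h, h', fi, uz, q10, c0' _ hme, c3 _ hmf, c0 _ hef]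
  · refine affine_total hU hV (exUV ?_) (Or.inl ?_)
    · rw [h, h']; linear_combination (-f * ζ) * he2
    · rw [h, h', vz, uz, q11, c0' _ hme, c0' _ hmf, c3 _ hef]
  · obtain ⟨g1, g2⟩ := affine_exotic hζ he hf
    rw [h, h']
    refine ⟨g1, Or.inr ?_⟩
    rw [g2, q12, c0' _ hef]
  · refine affine_total hU hV (exV h') (Or.inl ?_)
    rw [h, h', fi, uz2, q20, c0 _ hme, c3 _ hmf, c0' _ hef]
  · obtain ⟨g1, g2⟩ := affine_exotic hζ' he hf
    have hz4 : (ζ ^ 2) ^ 2 = ζ := by linear_combination ζ * h3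
    rw [hz4] at g1 g2
    rw [h, h']
    refine ⟨g1, Or.inr ?_⟩
    rw [g2, q21, c0 _ hef]
  · refine affine_total hU hV (exUV ?_) (Or.inl ?_)
    · rw [h, h']; linear_combination (-f * ζ ^ 2) * he2
    · rw [h, h', vz2, uz2, q22, c0 _ hme, c0 _ hmf, c3 _ hef]

theorem final_count (hζ : IsPrimitiveRoot ζ 3) [IsCyclotomicExtension {3} ℚ K] (u v : (𝓞 K)ˣ)
    (S : Set (Projectivization K (Fin 3 → K)))
    (hS : S = {P : Projectivization K (Fin 3 → K) |
      (P.rep 0) ^ 3 + algebraMap (𝓞 K) K (u : 𝓞 K) * (P.rep 1) ^ 3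
        + algebraMap (𝓞 K) K (v : 𝓞 K) * (P.rep 2) ^ 3 = 0}) :
    S.Finite ∧ (S.ncard = 3 ∨ S.ncard = 9) := by
  obtain ⟨hA, hcard⟩ := affine_count hζ u v rfl rfl
  set U := algebraMap (𝓞 K) K u with hUdef
  set V := algebraMap (𝓞 K) K v with hVdef
  have hU : U ≠ 0 := by rw [hUdef]; simp
  have hV : V ≠ 0 := by rw [hVdef]; simp
  have hB := finite_cube_roots (-U / V)
  have n1 : ∀ p : K × K, ![1, p.1, p.2] ≠ (0 : Fin 3 → K) := fun p h => by
    simpa using congrFun h 0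
  have n2 : ∀ c : K, ![0, 1, c] ≠ (0 : Fin 3 → K) := fun p h => by
    simpa using congrFun h 1
  let f1 : K × K → Projectivization K (Fin 3 → K) := fun p => Projectivization.mk K _ (n1 p)
  let f2 : K → Projectivization K (Fin 3 → K) := fun c => Projectivization.mk K _ (n2 c)
  have i1 : Function.Injective f1 := by
    rintro ⟨b, c⟩ ⟨b', c'⟩ h
    obtain ⟨a, ha⟩ := (Projectivization.mk_eq_mk_iff' K _ _ _ _).1 h
    have h0 := congrFun ha 0
    have h1 := congrFun ha 1
    have h2 := congrFun ha 2
    simp at h0 h1 h2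
    subst h0
    simp at h1 h2
    simp [h1, h2]
  have i2 : Function.Injective f2 := by
    intro c c' h
    obtain ⟨a, ha⟩ := (Projectivization.mk_eq_mk_iff' K _ _ _ _).1 h
    have h1 := congrFun ha 1
    have h2 := congrFun ha 2
    simp at h1 h2
    subst h1
    simpa using h2.symm
  have hmem : ∀ (w : Fin 3 → K) (hw : w ≠ 0), Projectivization.mk K w hw ∈ S ↔
      w 0 ^ 3 + U * w 1 ^ 3 + V * w 2 ^ 3 = 0 := by
    intro w hw
    obtain ⟨a, ha⟩ := Projectivization.exists_smul_eq_mk_rep K w hw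
    rw [hS, Set.mem_ofPred_eq, ← ha]
    simp only [Pi.smul_apply, Units.smul_def, smul_eq_mul]
    rw [show ((a : K) * w 0) ^ 3 + U * (a * w 1) ^ 3 + V * (a * w 2) ^ 3 =
      (a : K) ^ 3 * (w 0 ^ 3 + U * w 1 ^ 3 + V * w 2 ^ 3) by ring]
    simp
  have key : S = f1 '' {p : K × K | 1 + U * p.1 ^ 3 + V * p.2 ^ 3 = 0} ∪
      f2 '' {c : K | c ^ 3 = -U / V} := by
    ext P
    constructor
    · intro hP
      induction P with | h w hw
      have hP' := (hmem w hw).1 hP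
      by_cases h0 : w 0 = 0
      · right
        have h1 : w 1 ≠ 0 := by
          intro h1
          apply hw
          have h2 : w 2 = 0 := by simpa [h0, h1, hV] using hP'
          funext i
          fin_cases i <;> simp [h0, h1, h2]
        refine ⟨w 2 / w 1, ?_, ?_⟩
        · simp only [Set.mem_ofPred_eq]
          rw [h0] at hP'
          field_simp
          linear_combination hP'
        · refine (Projectivization.mk_eq_mk_iff' K _ _ _ _).2 ⟨(w 1)⁻¹, ?_⟩
          funext i
          fin_cases i <;> simp [h0, h1, div_eq_inv_mul]
      · left
        refine ⟨(w 1 / w 0, w 2 / w 0), ?_, ?_⟩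
        · simp only [Set.mem_ofPred_eq]
          field_simp
          linear_combination hP'
        · refine (Projectivization.mk_eq_mk_iff' K _ _ _ _).2 ⟨(w 0)⁻¹, ?_⟩
          funext i
          fin_cases i <;> simp [h0, div_eq_inv_mul]
    · rintro (⟨p, hp, rfl⟩ | ⟨c, hc, rfl⟩)
      · exact (hmem _ _).2 (by simpa using hp)
      · refine (hmem _ _).2 ?_
        simp only [Set.mem_ofPred_eq] at hc
        simp [hc]
        field_simp
        ring
  rw [key]
  refine ⟨(hA.image _).union (hB.image _), ?_⟩
  rw [Set.ncard_union_eq _ (hA.image _) (hB.image _), Set.ncard_image_of_injective _ i1,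
    Set.ncard_image_of_injective _ i2]
  · exact hcard
  · rw [Set.disjoint_left]
    rintro _ ⟨p, -, rfl⟩ ⟨c, -, h⟩
    obtain ⟨a, ha⟩ := (Projectivization.mk_eq_mk_iff' K _ _ _ _).1 h
    have h0 := congrFun ha 0
    have h1 := congrFun ha 1
    simp at h0 h1
    simp [h0] at h1

end final

/-- Let `K = ℚ(√-3)` and let `u, v` be units of its ring of integers.  The set of points
`(x : y : z)` of the projective plane `ℙ²(K)` satisfying `x³ + u y³ + v z³ = 0` is finite,
of cardinality `3` or `9`. -/
theorem twisted_fermat_cubic_card_points_over_Q_sqrt_neg_three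
    (K : Type) [Field K] [NumberField K]
    (s : K) (hs : s ^ 2 = -3) (hK : Module.finrank ℚ K = 2)
    (u v : (𝓞 K)ˣ)
    (S : Set (Projectivization K (Fin 3 → K)))
    (hS : S = {P : Projectivization K (Fin 3 → K) |
      (P.rep 0) ^ 3 + algebraMap (𝓞 K) K (u : 𝓞 K) * (P.rep 1) ^ 3
        + algebraMap (𝓞 K) K (v : 𝓞 K) * (P.rep 2) ^ 3 = 0}) :
    S.Finite ∧ (S.ncard = 3 ∨ S.ncard = 9) := by
  obtain ⟨ζ, hζ, hc⟩ := exists_cyclotomic_three K s hs hK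
  exact final_count hζ u v S hS
end
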